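/- arXiv:2604.05280 — 13 statements merged into one kernel-verified Lean document; each statement's English description precedes it below -/
import Mathlib

section
/- Let R be a commutative ring and h : ℤ → R a sequence satisfying h(−n) = −h(n) for all n ∈ ℤ. Define the defect Δ(a,b,c,d) := h(a+b)·h(a−b)·h(c+d)·h(c−d) − h(a+c)·h(a−c)·h(b+d)·h(b−d) + h(b+c)·h(b−c)·h(a+d)·h(a−d). Then for all integers m, n, r, c, d the identity h(c+d)·h(c−d)·Δ(m,n,r,c) = h(r+c)·h(r−c)·Δ(m,n,c,d) − h(n+c)·h(n−c)·Δ(m,r,c,d) + h(m+c)·h(m−c)·Δ(n,r,c,d) holds. (Rule II.1.) -/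
/-- The defect of the elliptic relation `E(a,b,c,d)` for the sequence `h`. -/
def ellDefect {R : Type*} [CommRing R] (h : ℤ → R) (a b c d : ℤ) : R :=
  h (a + b) * h (a - b) * h (c + d) * h (c - d) -
    h (a + c) * h (a - c) * h (b + d) * h (b - d) +
      h (b + c) * h (b - c) * h (a + d) * h (a - d)

/-- Rule II.1: a linear relation among defects of elliptic relations. -/
theorem ruleII1 {R : Type*} [CommRing R] (h : ℤ → R)
    (hneg : ∀ n : ℤ, h (-n) = -h n) (m n r c d : ℤ) :
    h (c + d) * h (c - d) * ellDefect h m n r c =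
      h (r + c) * h (r - c) * ellDefect h m n c d -
        h (n + c) * h (n - c) * ellDefect h m r c d +
          h (m + c) * h (m - c) * ellDefect h n r c d := by
  -- With `P x y = h (x + y) * h (x - y)`, each defect is a quadratic form in the values of `P`;
  -- on the right the terms with a factor `P m d`, `P n d` or `P r d` cancel in pairs.
  unfold ellDefect
  ring
end

section
/- Let R be a commutative ring and h : ℤ → R a sequence satisfying h(−n) = −h(n) for all n ∈ ℤ. Define the defect Δ(a,b,c,d) := h(a+b)·h(a−b)·h(c+d)·h(c−d) − h(a+c)·h(a−c)·h(b+d)·h(b−d) + h(b+c)·h(b−c)·h(a+d)·h(a−d). Then for all integers m, n, r, s, c, d the identity h(c+d)·h(c−d)·Δ(m,n,r,s) = h(n+d)·h(n−d)·Δ(m,r,s,c) − h(r+d)·h(r−d)·Δ(m,n,s,c) + h(s+d)·h(s−d)·Δ(m,n,r,c) + h(n+c)·h(n−c)·Δ(m,r,s,d) − h(r+c)·h(r−c)·Δ(m,n,s,d) + h(s+c)·h(s−c)·Δ(m,n,r,d) + h(n+r)·h(n−r)·Δ(m,s,c,d) − h(n+s)·h(n−s)·Δ(m,r,c,d) + h(r+s)·h(r−s)·Δ(m,n,c,d)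 − 2·h(m+d)·h(m−d)·Δ(n,r,s,c) holds. (Rule II.2.) -/
/-- Rule II.2: a linear relation deriving one elliptic relation from ten. -/
theorem ruleII2 {R : Type*} [CommRing R] (h : ℤ → R)
    (hneg : ∀ n : ℤ, h (-n) = -h n) (m n r s c d : ℤ) :
    h (c + d) * h (c - d) * ellDefect h m n r s =
      h (n + d) * h (n - d) * ellDefect h m r s c -
        h (r + d) * h (r - d) * ellDefect h m n s c +
          h (s + d) * h (s - d) * ellDefect h m n r c +
      h (n + c) * h (n - c) * ellDefect h m r s d -
        h (r + c) * h (r - c) * ellDefect h m n s d +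
          h (s + c) * h (s - c) * ellDefect h m n r d +
      h (n + r) * h (n - r) * ellDefect h m s c d -
        h (n + s) * h (n - s) * ellDefect h m r c d +
          h (r + s) * h (r - s) * ellDefect h m n c d -
      2 * (h (m + d) * h (m - d) * ellDefect h n r s c) := by
  -- With `A x y = h (x + y) * h (x - y)`, each defect is the Pfaffian expression
  -- `A a b * A c d - A a c * A b d + A b c * A a d`. All pairs on both sides occur in the order
  -- `m, n, r, s, c, d`, so this is a polynomial identity in the fifteen values of `A`.
  unfold ellDefect
  ring
end

section
/- Let R be a commutative ring and h a sequence indexed by the positive integers with values in R. For integers A > B > C > D ≥ 0 all of the same parity, write E*(A,B,C,D) for the relation h((A+B)/2)·h((A−B)/2)·h((C+D)/2)·h((C−D)/2) = h((A+C)/2)·h((A−C)/2)·h((B+D)/2)·h((B−D)/2) − h((B+C)/2)·h((B−C)/2)·h((A+D)/2)·h((A−D)/2). Fix an integer A₀ ≥ 0 and set (C_min, D_min) = (2, 0) if A₀ is even and (C_min, D_min) = (3, 1) if A₀ is odd. If E*(A,B,C_min,D_min) holds whenever A and B have the same parity as A₀ and A₀ ≥ A > B > C_min, and h((C_min+D_min)/2)·h((C_min−D_min)/2)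 is not a zero-divisor in R, then E*(A,B,C,D) holds whenever A, B, C, D all have the same parity as A₀ and A₀ ≥ A > B > C > D ≥ 0. (This is Lemma 2.1 of the paper, stated with all indices doubled so that the integer case of the lemma corresponds to even A₀ and the half-integer case to odd A₀.) -/
/-!
Write `[X,Y] = h((X+Y)/2) * h((X-Y)/2)`, so that `E*(A,B,C,D)` is the three-term Plücker relation
`[A,B][C,D] = [A,C][B,D] - [B,C][A,D]`. With `k = [Cmin,Dmin]`, the hypotheses say that `k[X,Y]` is
the 2×2 determinant `[X,Cmin][Y,Dmin] - [Y,Cmin][X,Dmin]` for `X > Y > Cmin`. Declaring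
`[Cmin,Cmin] = [Dmin,Dmin] = 0` and `[Dmin,Cmin] = -k` makes this formula hold trivially for
`Y = Cmin` and `Y = Dmin` too, and these are the only other values since `Cmin = Dmin + 2`. Thus all
the brackets, multiplied by `k`, are 2×2 minors `P X * Q Y - P Y * Q X`; such minors satisfy the
Plücker relation, and the factor `k²` cancels because `k` is not a zero-divisor.
-/

/-- The doubled elliptic relation `E*(A,B,C,D) = E(A/2,B/2,C/2,D/2)` for a sequence `h`
(indexed by positive integers, here modelled as `ℤ → R` with only positive indices used),
where `A, B, C, D` are integers of common parity. -/
def EllRelStar {R : Type*} [CommRing R] (h : ℤ → R) (A B C D : ℤ) : Prop :=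
  h ((A + B) / 2) * h ((A - B) / 2) * h ((C + D) / 2) * h ((C - D) / 2) =
    h ((A + C) / 2) * h ((A - C) / 2) * h ((B + D) / 2) * h ((B - D) / 2) -
      h ((B + C) / 2) * h ((B - C) / 2) * h ((A + D) / 2) * h ((A - D) / 2)

/-- Quantities `k * x` that are the 2×2 minors of a `2 × 4` matrix satisfy the three-term Plücker
relation after cancelling the non-zero-divisor `k`. -/
lemma plucker_of_minors {R : Type*} [CommRing R] {k ab cd ac bd bc ad : R}
    (hk : k ∈ nonZeroDivisors R) {pa pb pc pd qa qb qc qd : R}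
    (hab : k * ab = pa * qb - pb * qa) (hcd : k * cd = pc * qd - pd * qc)
    (hac : k * ac = pa * qc - pc * qa) (hbd : k * bd = pb * qd - pd * qb)
    (hbc : k * bc = pb * qc - pc * qb) (had : k * ad = pa * qd - pd * qa) :
    ab * cd = ac * bd - bc * ad := by
  have hkk : k * k ∈ nonZeroDivisors R := mul_mem hk hk
  rw [← mul_cancel_left_mem_nonZeroDivisors hkk]
  linear_combination k * cd * hab + (pa * qb - pb * qa) * hcd
    - k * bd * hac - (pa * qc - pc * qa) * hbd + k * ad * hbc + (pb * qc - pc * qb) * had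

/-- Lemma 2.1 (with all indices doubled): if the doubled elliptic relations
`E*(A,B,C_min,D_min)` hold for all `A₀ ≥ A > B > C_min` of the same parity as `A₀`,
and `h((C_min+D_min)/2) * h((C_min-D_min)/2)` is not a zero-divisor, then all doubled
elliptic relations `E*(A,B,C,D)` with `A₀ ≥ A > B > C > D ≥ 0` of the parity of `A₀` hold. -/
theorem ellRel_min_case {R : Type*} [CommRing R] (h : ℤ → R) (A₀ : ℤ) (hA₀ : 0 ≤ A₀)
    (Cmin Dmin : ℤ)
    (hCmin : Cmin = if Even A₀ then 2 else 3) (hDmin : Dmin = if Even A₀ then 0 else 1)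
    (hbase : ∀ A B : ℤ, A % 2 = A₀ % 2 → B % 2 = A₀ % 2 →
      A₀ ≥ A → A > B → B > Cmin → EllRelStar h A B Cmin Dmin)
    (hreg : h ((Cmin + Dmin) / 2) * h ((Cmin - Dmin) / 2) ∈ nonZeroDivisors R) :
    ∀ A B C D : ℤ, A % 2 = A₀ % 2 → B % 2 = A₀ % 2 → C % 2 = A₀ % 2 → D % 2 = A₀ % 2 →
      A₀ ≥ A → A > B → B > C → C > D → D ≥ 0 → EllRelStar h A B C D := by
  have hcd : Cmin = Dmin + 2 := by
    rw [hCmin, hDmin]; split_ifs <;> rfl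
  have hd : Dmin = A₀ % 2 := by
    rw [hDmin]
    split_ifs with he
    · exact (Int.even_iff.mp he).symm
    · exact (Int.not_even_iff.mp he).symm
  clear hCmin hDmin
  let br : ℤ → ℤ → R := fun X Y => h ((X + Y) / 2) * h ((X - Y) / 2)
  -- `P` and `Q` are the brackets with `Cmin` and `Dmin`, given their antisymmetric values where
  -- the index of `h` would not be positive.
  let P : ℤ → R := fun X => if X = Dmin then -br Cmin Dmin else if X = Cmin then 0 else br X Cmin
  let Q : ℤ → R := fun X => if X = Dmin then 0 else br X Dmin
  have minor : ∀ X Y : ℤ, X % 2 = A₀ % 2 → Y % 2 = A₀ % 2 → A₀ ≥ X → X > Y → Y ≥ 0 →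
      br Cmin Dmin * br X Y = P X * Q Y - P Y * Q X := by
    intro X Y hX hY hXA hXY hY0
    have hXd : X ≠ Dmin := by omega
    have hcd' : Cmin ≠ Dmin := by omega
    by_cases hYd : Y = Dmin
    · subst hYd
      simp [P, Q, hXd]
    by_cases hYc : Y = Cmin
    · subst hYc
      have hXc : X ≠ Y := by omega
      simp only [P, Q, hXd, hcd', hXc, if_true, if_false]
      ring
    · have hXc : X ≠ Cmin := by omega
      have hb := hbase X Y hX hY hXA hXY (by omega)
      unfold EllRelStar at hb
      simp only [P, Q, br, hXd, hXc, hYd, hYc, if_false]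
      linear_combination hb
  intro A B C D hA hB hC hD hAA hAB hBC hCD hD0
  have key := plucker_of_minors (k := br Cmin Dmin) hreg
    (minor A B hA hB hAA hAB (by omega)) (minor C D hC hD (by omega) hCD hD0)
    (minor A C hA hC hAA (by omega) (by omega)) (minor B D hB hD (by omega) (by omega) hD0)
    (minor B C hB hC (by omega) hBC (by omega)) (minor A D hA hD hAA (by omega) hD0)
  unfold EllRelStar
  simp only [br] at key
  linear_combination key
end

section
/- Let R be a commutative ring and h a sequence indexed by the positive integers with values in R. If h satisfies E(m,n,1,0), i.e. h(m+n)·h(m−n)·h(1)² = h(m+1)·h(m−1)·h(n)² − h(n+1)·h(n−1)·h(m)², for all integers m > n > 1, and h(1) is not a zero-divisor in R, then h satisfies the elliptic relation E(a,b,c,d), i.e. h(a+b)·h(a−b)·h(c+d)·h(c−d) = h(a+c)·h(a−c)·h(b+d)·h(b−d) − h(b+c)·h(b−c)·h(a+d)·h(a−d), for all integers a > b > c > d ≥ 0. -/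
/-!
Put `A m = h (m + 1) * h (m - 1)` and `B m = h m ^ 2`, with the values at `m = 0, 1` computed as
if `h` were extended to an odd function: `A 1 = 0`, `A 0 = -h 1 ^ 2`, `B 0 = 0`. Then
`h (m + n) * h (m - n) * h 1 ^ 2 = A m * B n - A n * B m` holds for all `m > n ≥ 0`: it is the
hypothesis for `n > 1`, and trivial for `n = 0, 1` (`exists_minor_form`). Thus, up to the factor
`h 1 ^ 2`, the products `h (m + n) * h (m - n)` are the 2 × 2 minors of a matrix with two rows, and
the elliptic relation multiplied by `h 1 ^ 4` is the Plücker relation between these minors.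
The factor `h 1 ^ 4` is cancelled because `h 1` is not a zero-divisor.
-/

/-- The products `h (m + n) * h (m - n) * h 1 ^ 2` are the 2 × 2 minors of a two-row matrix
with rows `A` and `B`, including the degenerate columns `0` and `1`. -/
lemma exists_minor_form {R : Type*} [CommRing R] (h : ℤ → R)
    (hbase : ∀ m n : ℤ, m > n → n > 1 →
      h (m + n) * h (m - n) * h 1 ^ 2 =
        h (m + 1) * h (m - 1) * h n ^ 2 - h (n + 1) * h (n - 1) * h m ^ 2) :
    ∃ A B : ℤ → R, ∀ m n : ℤ, m > n → n ≥ 0 →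
      h (m + n) * h (m - n) * h 1 ^ 2 = A m * B n - A n * B m := by
  -- `h 0` and `h (-1)` are arbitrary here, so the columns `0` and `1` are prescribed by hand.
  refine ⟨fun m => if m = 0 then -h 1 ^ 2 else if m = 1 then 0 else h (m + 1) * h (m - 1),
    fun m => if m = 0 then 0 else h m ^ 2, fun m n hmn hn => ?_⟩
  have hm0 : m ≠ 0 := by omega
  rcases (by omega : n = 0 ∨ n = 1 ∨ n > 1) with rfl | rfl | hn1
  · simp only [hm0, if_true, if_false, add_zero, sub_zero]
    ring
  · have hm1 : m ≠ 1 := by omega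
    simp [hm0, hm1]
  · have hm1 : m ≠ 1 := by omega
    have hn0 : n ≠ 0 := by omega
    have hn1' : n ≠ 1 := by omega
    simpa only [hm0, hm1, hn0, hn1', if_false] using hbase m n hmn hn1

/-- Corollary 2.2: if `h` (indexed by positive integers, modelled as `ℤ → R` with only
positive indices used) satisfies `E(m,n,1,0)` for all `m > n > 1` and `h 1` is not a
zero-divisor, then `h` satisfies all elliptic relations `E(a,b,c,d)`
with `a > b > c > d ≥ 0`. -/
theorem ellRel_from_one_zero {R : Type*} [CommRing R] (h : ℤ → R)
    (hbase : ∀ m n : ℤ, m > n → n > 1 →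
      h (m + n) * h (m - n) * h 1 ^ 2 =
        h (m + 1) * h (m - 1) * h n ^ 2 - h (n + 1) * h (n - 1) * h m ^ 2)
    (hreg : h 1 ∈ nonZeroDivisors R) :
    ∀ a b c d : ℤ, a > b → b > c → c > d → d ≥ 0 →
      h (a + b) * h (a - b) * h (c + d) * h (c - d) =
        h (a + c) * h (a - c) * h (b + d) * h (b - d) -
          h (b + c) * h (b - c) * h (a + d) * h (a - d) := by
  intro a b c d hab hbc hcd hd
  obtain ⟨A, B, hAB⟩ := exists_minor_form h hbase
  have e1 := hAB a b hab (by omega)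
  have e2 := hAB c d hcd hd
  have e3 := hAB a c (by omega) (by omega)
  have e4 := hAB b d (by omega) hd
  have e5 := hAB b c hbc (by omega)
  have e6 := hAB a d (by omega) hd
  refine (mul_cancel_right_mem_nonZeroDivisors (pow_mem hreg 4)).mp ?_
  calc h (a + b) * h (a - b) * h (c + d) * h (c - d) * h 1 ^ 4
      = (h (a + b) * h (a - b) * h 1 ^ 2) * (h (c + d) * h (c - d) * h 1 ^ 2) := by ring
    _ = (h (a + c) * h (a - c) * h 1 ^ 2) * (h (b + d) * h (b - d) * h 1 ^ 2) -
        (h (b + c) * h (b - c) * h 1 ^ 2) * (h (a + d) * h (a - d) * h 1 ^ 2) := by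
      -- the Plücker relation for the columns `a, b, c, d`
      rw [e1, e2, e3, e4, e5, e6]
      ring
    _ = _ := by ring
end

section
/- Let R be a commutative ring, h a sequence indexed by the positive integers with values in R, and a > b > c > d ≥ 0 integers with a + b ≥ 5. If h satisfies the Somos 4 recurrence E(n,2,1,0), i.e. h(n+2)·h(n−2)·h(1)² = h(2)²·h(n+1)·h(n−1) − h(3)·h(1)·h(n)², for all n with 3 ≤ n ≤ a+b−2, and h(n) is not a zero-divisor in R for every n ≤ a+b−4, then h satisfies the elliptic relation E(a,b,c,d): h(a+b)·h(a−b)·h(c+d)·h(c−d) = h(a+c)·h(a−c)·h(b+d)·h(b−d) − h(b+c)·h(b−c)·h(a+d)·h(a−d). -/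
/-!
Write `W(a,b) = h(a+b) h(a-b)` and put `h(0) = 0`, `h(-1) = -h(1)`. The relation `E(a,b,c,d)` is
then the Plücker relation `W(a,b) W(c,d) = W(a,c) W(b,d) - W(b,c) W(a,d)`, and multiplying by
`h(1)^4` reduces it to the family `E(x,y,1,0)`: `W(x,y) h(1)² = F(x,y)` with
`F(x,y) = h(x+1) h(x-1) h(y)² - h(y+1) h(y-1) h(x)²` (`plucker_of_somos`).

The family `E(x,y,1,0)` is proved by induction on `y` (`rel_one_zero`). The cases `y ≤ 1` are
trivial and `y = 2` is the Somos 4 recurrence. For `y ≥ 3` the step rests on the identity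
`F(p+1,q+2) F(p,q-1) = F(p+2,q+1) F(p-1,q)` (`ellF_mul_ellF`). With `p = x-1`, `q = y-2`, the other
three factors are known by induction, and comparing both sides leaves `E(x,y,1,0)` multiplied by
`h(x+y-4) h(x-y+2)`; it is this choice of identity that keeps the cancelled indices `≤ x+y-4`.

The key identity is a consequence of Somos 4 and of the Somos 5 recurrence
`h(1) h(2) h(n+2) h(n-3) = h(2) h(3) h(n+1) h(n-2) - h(1) h(4) h(n) h(n-1)`, which follows from
Somos 4 by induction (`somos_five`). Multiplying two consecutive Somos 4 relations and comparing
with Somos 5 shows that the quotient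
`(h(1)² h(n+2)² h(n-1)² + h(2)² (h(n)³ h(n+2) + h(n+1)³ h(n-1)) - h(1) h(3) h(n)² h(n+1)²) /
(h(n-1) h(n) h(n+1) h(n+2))` does not depend on `n` (`invariant`).
-/

section EllipticRelations

variable {R : Type*} [CommRing R]

/-- The quantity `F(x,y)` equal to `g(x+y) g(x-y) g(1)²` when `E(x,y,1,0)` holds. -/
def ellF (g : ℤ → R) (x y : ℤ) : R :=
  g (x + 1) * g (x - 1) * g y ^ 2 - g (y + 1) * g (y - 1) * g x ^ 2

/-- The Somos 4 relation at `n`. -/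
def SomosFour (g : ℤ → R) (n : ℤ) : Prop :=
  g (n + 2) * g (n - 2) * g 1 ^ 2 = g 2 ^ 2 * g (n + 1) * g (n - 1) - g 3 * g 1 * g n ^ 2

/-- The Somos 5 relation centred at `n - 1/2`. -/
def SomosFive (g : ℤ → R) (n : ℤ) : Prop :=
  g 2 * g 1 * g (n + 2) * g (n - 3) =
    g 3 * g 2 * g (n + 1) * g (n - 2) - g 4 * g 1 * g n * g (n - 1)

/-- Each Somos 5 relation follows from the previous one and Somos 4, after multiplication by
`g 1 * g (n - 2)`. -/
lemma somos_five (g : ℤ → R) (N : ℤ) (g0 : g 0 = 0) (g1 : g (-1) = -g 1)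
    (h4 : ∀ n : ℤ, 1 ≤ n → n ≤ N - 2 → SomosFour g n)
    (hreg : ∀ n : ℤ, 1 ≤ n → n ≤ N - 4 → g n ∈ nonZeroDivisors R)
    (n : ℤ) (hn : 2 ≤ n) (hnN : n ≤ N - 2) : SomosFive g n := by
  induction n, hn using Int.leInduction with
  | base =>
    norm_num [SomosFive, g0, g1]
    ring
  | succ n hn ih =>
    have ih := ih (by omega)
    have e1 := h4 (n + 1) (by omega) (by omega)
    have e2 := h4 (n - 1) (by omega) (by omega)
    have r1 := hreg 1 le_rfl (by omega)
    have r2 := hreg (n - 1) (by omega) (by omega)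
    unfold SomosFive SomosFour at *
    ring_nf at ih e1 e2 r2 ⊢
    refine (mul_cancel_left_mem_nonZeroDivisors (mul_mem r1 r2)).1 ?_
    linear_combination (g 2 * g (-2 + n)) * e1 - (g 2 * g (2 + n)) * e2 + g 1 * g (1 + n) * ih

/-- The invariant of the Somos 4 recurrence, with the common value of the quotient written as
`(g 1 ^ 4 * g 4 + g 2 ^ 5) / (g 1 * g 2 * g 3)`; here `A, …, F` are six consecutive terms. -/
lemma invariant {s1 s2 s3 s4 A B C D E F : R} (r1 : s1 ∈ nonZeroDivisors R)
    (h1 : E * A * s1 ^ 2 = s2 ^ 2 * D * B - s3 * s1 * C ^ 2)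
    (h2 : F * B * s1 ^ 2 = s2 ^ 2 * E * C - s3 * s1 * D ^ 2)
    (h5 : s2 * s1 * F * A = s3 * s2 * E * B - s4 * s1 * D * C) :
    s1 * s2 * s3 * (s1 ^ 2 * E ^ 2 * B ^ 2 + s2 ^ 2 * (C ^ 3 * E + D ^ 3 * B)
      - s3 * s1 * C ^ 2 * D ^ 2) = (s1 ^ 4 * s4 + s2 ^ 5) * (B * C * D * E) := by
  refine (mul_cancel_left_mem_nonZeroDivisors r1).1 ?_
  linear_combination (-s1 ^ 4 * E * B) * h5 + s1 * s2 * F * B * s1 ^ 2 * h1 +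
    s1 * s2 * (s2 ^ 2 * D * B - s3 * s1 * C ^ 2) * h2

/-- The identity `F(p+1,q+2) F(p,q-1) = F(p+2,q+1) F(p-1,q)` of `ellF_mul_ellF`, where `A, …, F`
are the terms of index `p-2, …, p+3` and `A₂, …, F₂` those of index `q-2, …, q+3`. It follows from
the equality `k` of the invariants at `p` and `q` and the equality `v` got by eliminating `s4`
between the two Somos 5 relations. -/
lemma key_identity {s1 s2 s3 s4 A B C D E F A₂ B₂ C₂ D₂ E₂ F₂ : R}
    (r1 : s1 ∈ nonZeroDivisors R) (r2 : s2 ∈ nonZeroDivisors R) (r3 : s3 ∈ nonZeroDivisors R)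
    (h1 : E * A * s1 ^ 2 = s2 ^ 2 * D * B - s3 * s1 * C ^ 2)
    (h2 : F * B * s1 ^ 2 = s2 ^ 2 * E * C - s3 * s1 * D ^ 2)
    (h5 : s2 * s1 * F * A = s3 * s2 * E * B - s4 * s1 * D * C)
    (k1 : E₂ * A₂ * s1 ^ 2 = s2 ^ 2 * D₂ * B₂ - s3 * s1 * C₂ ^ 2)
    (k2 : F₂ * B₂ * s1 ^ 2 = s2 ^ 2 * E₂ * C₂ - s3 * s1 * D₂ ^ 2)
    (k5 : s2 * s1 * F₂ * A₂ = s3 * s2 * E₂ * B₂ - s4 * s1 * D₂ * C₂) :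
    (E * C * E₂ ^ 2 - F₂ * D₂ * D ^ 2) * (D * B * B₂ ^ 2 - C₂ * A₂ * C ^ 2) =
      (F * D * D₂ ^ 2 - E₂ * C₂ * E ^ 2) * (C * A * C₂ ^ 2 - D₂ * B₂ * B ^ 2) := by
  have u := invariant r1 h1 h2 h5
  have w := invariant r1 k1 k2 k5
  have k : (s1 ^ 2 * E ^ 2 * B ^ 2 + s2 ^ 2 * (C ^ 3 * E + D ^ 3 * B)
        - s3 * s1 * C ^ 2 * D ^ 2) * (B₂ * C₂ * D₂ * E₂) =
      (s1 ^ 2 * E₂ ^ 2 * B₂ ^ 2 + s2 ^ 2 * (C₂ ^ 3 * E₂ + D₂ ^ 3 * B₂)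
        - s3 * s1 * C₂ ^ 2 * D₂ ^ 2) * (B * C * D * E) := by
    refine (mul_cancel_left_mem_nonZeroDivisors (mul_mem (mul_mem r1 r2) r3)).1 ?_
    linear_combination (B₂ * C₂ * D₂ * E₂) * u - (B * C * D * E) * w
  have v : s1 * (F₂ * A₂ * (C * D) - F * A * (C₂ * D₂)) =
      s3 * (E₂ * B₂ * (C * D) - E * B * (C₂ * D₂)) := by
    refine (mul_cancel_left_mem_nonZeroDivisors r2).1 ?_
    linear_combination C * D * k5 - C₂ * D₂ * h5
  refine (mul_cancel_left_mem_nonZeroDivisors (pow_mem r1 2)).1 ?_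
  linear_combination (s1 * C * D * C₂ * D₂) * v - k - C ^ 3 * E * E₂ * C₂ * k1
    - D ^ 3 * B * D₂ * B₂ * k2 + B * D * D₂ ^ 3 * B₂ * h2 + E * C * E₂ * C₂ ^ 3 * h1

lemma ellF_mul_ellF {g : ℤ → R} {p q : ℤ}
    (r1 : g 1 ∈ nonZeroDivisors R) (r2 : g 2 ∈ nonZeroDivisors R) (r3 : g 3 ∈ nonZeroDivisors R)
    (h1 : SomosFour g p) (h2 : SomosFour g (p + 1)) (h5 : SomosFive g (p + 1))
    (k1 : SomosFour g q) (k2 : SomosFour g (q + 1)) (k5 : SomosFive g (q + 1)) :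
    ellF g (p + 1) (q + 2) * ellF g p (q - 1) = ellF g (p + 2) (q + 1) * ellF g (p - 1) q := by
  have i1 (n : ℤ) : n + 1 + 1 = n + 2 := by ring
  have i2 (n : ℤ) : n + 1 + 2 = n + 3 := by ring
  have i3 (n : ℤ) : n + 1 - 1 = n := by ring
  have i4 (n : ℤ) : n + 1 - 2 = n - 1 := by ring
  have i5 (n : ℤ) : n + 1 - 3 = n - 2 := by ring
  have i6 (n : ℤ) : n + 2 + 1 = n + 3 := by ring
  have i7 (n : ℤ) : n + 2 - 1 = n + 1 := by ring
  have i8 (n : ℤ) : n - 1 + 1 = n := by ring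
  have i9 (n : ℤ) : n - 1 - 1 = n - 2 := by ring
  simp only [SomosFour, SomosFive, ellF, i1, i2, i3, i4, i5, i6, i7, i8, i9] at *
  exact key_identity r1 r2 r3 h1 h2 h5 k1 k2 k5

/-- The relations `E(x,y,1,0)` with `x + y ≤ N`. -/
lemma rel_one_zero (g : ℤ → R) (N : ℤ) (g0 : g 0 = 0) (g1 : g (-1) = -g 1)
    (h4 : ∀ n : ℤ, 1 ≤ n → n ≤ N - 2 → SomosFour g n)
    (hreg : ∀ n : ℤ, 1 ≤ n → n ≤ N - 4 → g n ∈ nonZeroDivisors R)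
    (y : ℕ) : ∀ x : ℤ, y < x → x + y ≤ N →
      g (x + y) * g (x - y) * g 1 ^ 2 = ellF g x y := by
  induction y using Nat.strong_induction_on with
  | _ y ih =>
    intro x hyx hN
    match y, ih, hyx, hN with
    | 0, _, _, _ =>
      norm_num [ellF, g0, g1]
      ring
    | 1, _, _, _ => norm_num [ellF, g0]
    | 2, _, hx, hN =>
      have e := h4 x (by push_cast at hx; omega) (by push_cast at hN; omega)
      unfold SomosFour at e
      norm_num [ellF]
      linear_combination e
    | b + 3, ih, hx, hN =>
      push_cast at hx hN
      have f1 := ih (b + 2) (by omega) (x + 1) (by push_cast; omega) (by push_cast; omega)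
      have f2 := ih b (by omega) (x - 1) (by omega) (by omega)
      have f3 := ih (b + 1) (by omega) (x - 2) (by push_cast; omega) (by push_cast; omega)
      have r1 := hreg 1 (by omega) (by omega)
      have r2 := hreg 2 (by omega) (by omega)
      have r3 := hreg 3 (by omega) (by omega)
      have s5 := somos_five g N g0 g1 h4 hreg
      have key := ellF_mul_ellF (p := x - 1) (q := b + 1) r1 r2 r3
        (h4 _ (by omega) (by omega)) (h4 _ (by omega) (by omega)) (s5 _ (by omega) (by omega))
        (h4 _ (by omega) (by omega)) (h4 _ (by omega) (by omega)) (s5 _ (by omega) (by omega))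
      have c1 := hreg (x + b - 1) (by omega) (by omega)
      have c2 := hreg (x - b - 1) (by omega) (by omega)
      refine (mul_cancel_left_mem_nonZeroDivisors
        (mul_mem (mul_mem c1 c2) (pow_mem r1 2))).1 ?_
      -- The goal is now `ellF_mul_ellF` with all factors but `F(x, b+3)` replaced using `f1, f2, f3`.
      push_cast at f1 f2 f3 ⊢
      ring_nf at key f1 f2 f3 ⊢
      rw [← f1, ← f2, ← f3] at key
      linear_combination -key

/-- Reduction of `E(a,b,c,d)` to the six relations `E(x,y,1,0)` with `x > y` among `a, b, c, d`. -/
lemma plucker_of_somos (g : ℤ → R) (N : ℤ) (hN : 5 ≤ N) (g0 : g 0 = 0) (g1 : g (-1) = -g 1)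
    (h4 : ∀ n : ℤ, 1 ≤ n → n ≤ N - 2 → SomosFour g n)
    (hreg : ∀ n : ℤ, 1 ≤ n → n ≤ N - 4 → g n ∈ nonZeroDivisors R)
    (a b c d : ℤ) (hab : a > b) (hbc : b > c) (hcd : c > d) (hd : d ≥ 0) (habN : a + b ≤ N) :
    g (a + b) * g (a - b) * g (c + d) * g (c - d) =
      g (a + c) * g (a - c) * g (b + d) * g (b - d) -
        g (b + c) * g (b - c) * g (a + d) * g (a - d) := by
  have E : ∀ x y : ℤ, 0 ≤ y → y < x → x + y ≤ N →
      g (x + y) * g (x - y) * g 1 ^ 2 = ellF g x y := by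
    intro x y hy hyx hxy
    lift y to ℕ using hy
    exact rel_one_zero g N g0 g1 h4 hreg y x hyx hxy
  have e_ab := E a b (by omega) (by omega) (by omega)
  have e_ac := E a c (by omega) (by omega) (by omega)
  have e_ad := E a d (by omega) (by omega) (by omega)
  have e_bc := E b c (by omega) (by omega) (by omega)
  have e_bd := E b d (by omega) (by omega) (by omega)
  have e_cd := E c d (by omega) (by omega) (by omega)
  have r1 := hreg 1 le_rfl (by omega)
  refine (mul_cancel_left_mem_nonZeroDivisors (pow_mem r1 4)).1 ?_
  have p : ellF g a b * ellF g c d = ellF g a c * ellF g b d - ellF g b c * ellF g a d := by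
    unfold ellF; ring
  rw [← e_ab, ← e_ac, ← e_ad, ← e_bc, ← e_bd, ← e_cd] at p
  linear_combination p

end EllipticRelations

/-- Theorem 2.4: if `h` (indexed by positive integers, modelled as `ℤ → R` with only
positive indices used) satisfies the Somos 4 recurrence `E(n,2,1,0)` for `3 ≤ n ≤ a+b-2`
and `h n` is not a zero-divisor for every positive `n ≤ a+b-4`, then `h` satisfies the
elliptic relation `E(a,b,c,d)`. -/
theorem ellRel_from_somos {R : Type*} [CommRing R] (h : ℤ → R)
    (a b c d : ℤ) (hab : a > b) (hbc : b > c) (hcd : c > d) (hd : d ≥ 0)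
    (habsum : a + b ≥ 5)
    (hsomos : ∀ n : ℤ, 3 ≤ n → n ≤ a + b - 2 →
      h (n + 2) * h (n - 2) * h 1 ^ 2 =
        h 2 ^ 2 * h (n + 1) * h (n - 1) - h 3 * h 1 * h n ^ 2)
    (hreg : ∀ n : ℤ, 1 ≤ n → n ≤ a + b - 4 → h n ∈ nonZeroDivisors R) :
    h (a + b) * h (a - b) * h (c + d) * h (c - d) =
      h (a + c) * h (a - c) * h (b + d) * h (b - d) -
        h (b + c) * h (b - c) * h (a + d) * h (a - d) := by
  -- The extension of `h` by `0` at `0` and by `-h 1` at `-1`; lower indices are irrelevant.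
  let g : ℤ → R := fun n => if 0 < n then h n else if n = 0 then 0 else -h 1
  have gpos : ∀ n : ℤ, 0 < n → g n = h n := fun n hn => if_pos hn
  have g0 : g 0 = 0 := by simp [g]
  have g1 : g (-1) = -g 1 := by simp [g]
  have key := plucker_of_somos g (a + b) habsum g0 g1 ?_ ?_ a b c d hab hbc hcd hd le_rfl
  · rwa [gpos _ (by omega), gpos _ (by omega), gpos _ (by omega), gpos _ (by omega),
      gpos _ (by omega), gpos _ (by omega), gpos _ (by omega), gpos _ (by omega),
      gpos _ (by omega), gpos _ (by omega), gpos _ (by omega), gpos _ (by omega)] at key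
  · intro n hn hn2
    unfold SomosFour
    -- For `n = 1, 2` the relation is automatic from `g 0 = 0` and `g (-1) = -g 1`.
    obtain rfl | rfl | hn3 : n = 1 ∨ n = 2 ∨ 3 ≤ n := by omega
    · norm_num [g0, g1]
    · norm_num [g0]
      ring
    · rw [gpos (n + 2) (by omega), gpos (n - 2) (by omega), gpos (n + 1) (by omega),
        gpos (n - 1) (by omega), gpos n (by omega), gpos 1 (by omega), gpos 2 (by omega),
        gpos 3 (by omega)]
      exact hsomos n hn3 hn2
  · intro n hn hn2
    rw [gpos n (by omega)]
    exact hreg n hn hn2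
end

section
/- Let R be a commutative ring and r, s positive integers of opposite parity with r < s. Let h and h' be two sequences indexed by the positive integers with values in R such that both satisfy, for all positive integers i, the relations E(2r+i, r+i, r, 0): h(3r+2i)·h(r)³ = h(3r+i)·h(r+i)³ − h(2r+i)³·h(i), and E(s+r+i, r+i, r, 0): h(s+2r+2i)·h(s)·h(r)² = h(s+2r+i)·h(s+i)·h(r+i)² − h(2r+i)·h(s+r+i)²·h(i). If h(n) = h'(n) for every n ≤ 3r with n ≡ r (mod 2) and for every n ≤ s+2r with n ≡ s (mod 2), and h(s)·h(r) is not a zero-divisor in R, then h(n) = h'(n) for all positive integers n. -/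
/-!
Strong induction on `n`. Every index beyond the initial ranges is the largest index of one of the
relations: `n = 3r + 2i` when `n ≡ r (mod 2)`, and `n = s + 2r + 2i` when `n ≡ s (mod 2)`. All
indices on the right-hand side are then positive and smaller than `n`, so the two sequences
agree there, and the coefficient of `h n` on the left, `h(r)³` or `h(s)·h(r)²`, is the same for both
sequences and can be cancelled because it is not a zero-divisor.
-/

/-- Proposition 3.2 (identity principle): let `r < s` be positive integers of opposite
parity, and let `h, h'` (indexed by positive integers, modelled as `ℤ → R` with only
positive indices used) both satisfy `E(2r+i, r+i, r, 0)` and `E(s+r+i, r+i, r, 0)`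
for all positive integers `i`. If `h` and `h'` agree on all `n ≤ 3r` of the parity of `r`
and on all `n ≤ s+2r` of the parity of `s`, and `h s * h r` is not a zero-divisor,
then `h = h'` on all positive indices. -/
theorem even_odd_ext {R : Type*} [CommRing R] (r s : ℤ)
    (hr : 0 < r) (hrs : r < s) (hpar : r % 2 ≠ s % 2) (h h' : ℤ → R)
    (hrel₁ : ∀ i : ℤ, 1 ≤ i →
      h (3 * r + 2 * i) * h r ^ 3 = h (3 * r + i) * h (r + i) ^ 3 - h (2 * r + i) ^ 3 * h i)
    (hrel₂ : ∀ i : ℤ, 1 ≤ i →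
      h (s + 2 * r + 2 * i) * h s * h r ^ 2 =
        h (s + 2 * r + i) * h (s + i) * h (r + i) ^ 2 - h (2 * r + i) * h (s + r + i) ^ 2 * h i)
    (hrel₁' : ∀ i : ℤ, 1 ≤ i →
      h' (3 * r + 2 * i) * h' r ^ 3 =
        h' (3 * r + i) * h' (r + i) ^ 3 - h' (2 * r + i) ^ 3 * h' i)
    (hrel₂' : ∀ i : ℤ, 1 ≤ i →
      h' (s + 2 * r + 2 * i) * h' s * h' r ^ 2 =
        h' (s + 2 * r + i) * h' (s + i) * h' (r + i) ^ 2 -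
          h' (2 * r + i) * h' (s + r + i) ^ 2 * h' i)
    (hinit_r : ∀ n : ℤ, 1 ≤ n → n ≤ 3 * r → n % 2 = r % 2 → h n = h' n)
    (hinit_s : ∀ n : ℤ, 1 ≤ n → n ≤ s + 2 * r → n % 2 = s % 2 → h n = h' n)
    (hreg : h s * h r ∈ nonZeroDivisors R) :
    ∀ n : ℤ, 1 ≤ n → h n = h' n := by
  obtain ⟨hs_reg, hr_reg⟩ := mul_mem_nonZeroDivisors.mp hreg
  have er : h r = h' r := hinit_r r (by omega) (by omega) rfl
  have es : h s = h' s := hinit_s s (by omega) (by omega) rfl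
  have main : ∀ N : ℕ, ∀ n : ℤ, 1 ≤ n → n ≤ N → h n = h' n := by
    intro N
    induction N with
    | zero => intro n h1 h2; omega
    | succ N ih =>
      intro n h1 h2
      push_cast at h2
      by_cases hn : n % 2 = r % 2
      · by_cases hle : n ≤ 3 * r
        · exact hinit_r n h1 hle hn
        · obtain ⟨i, rfl⟩ : ∃ i, n = 3 * r + 2 * i := ⟨(n - 3 * r) / 2, by omega⟩
          have e := hrel₁ i (by omega)
          have e' := hrel₁' i (by omega)
          rw [ih (3 * r + i) (by omega) (by omega), ih (r + i) (by omega) (by omega),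
            ih (2 * r + i) (by omega) (by omega), ih i (by omega) (by omega), ← e', ← er] at e
          exact (mul_cancel_right_mem_nonZeroDivisors (pow_mem hr_reg 3)).mp e
      · by_cases hle : n ≤ s + 2 * r
        · exact hinit_s n h1 hle (by omega)
        · obtain ⟨i, rfl⟩ : ∃ i, n = s + 2 * r + 2 * i := ⟨(n - (s + 2 * r)) / 2, by omega⟩
          have e := hrel₂ i (by omega)
          have e' := hrel₂' i (by omega)
          rw [ih (s + 2 * r + i) (by omega) (by omega), ih (s + i) (by omega) (by omega),
            ih (r + i) (by omega) (by omega), ih (2 * r + i) (by omega) (by omega),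
            ih (s + r + i) (by omega) (by omega), ih i (by omega) (by omega), ← e', ← er, ← es,
            mul_assoc, mul_assoc] at e
          exact (mul_cancel_right_mem_nonZeroDivisors
            (mul_mem hs_reg (pow_mem hr_reg 2))).mp e
  intro n hn
  exact main n.toNat n hn (by omega)
end

section
/- Let R be a commutative ring and let h, h' be two sequences indexed by the positive integers with values in R, each satisfying the even-odd recurrence: h(2n+1)·h(1)² = h(n+2)·h(n)³ − h(n−1)·h(n+1)³ for all n ≥ 2, and h(2n)·h(2)·h(1)² = h(n)·(h(n+2)·h(n−1)² − h(n+1)²·h(n−2)) for all n ≥ 3. If h(n) = h'(n) for 1 ≤ n ≤ 4 and h(2)·h(1) is not a zero-divisor in R, then h = h'. -/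
/-!
For `n ≥ 5`, writing `n = 2m` (so `m ≥ 3`) or `n = 2m + 1` (so `m ≥ 2`), the recurrence expresses
`h n`, up to the factor `h 2 * h 1 ^ 2` or `h 1 ^ 2`, through values of `h` at positive indices at
most `m + 2 < n`. Both factors are non-zero-divisors because `h 2 * h 1` is, so they cancel, and
strong induction starting from the indices `1, …, 4` gives the equality everywhere.
-/

/-- Corollary 3.3 (identity principle for the even-odd recurrence): two sequences
(indexed by positive integers, modelled as `ℤ → R` with only positive indices used)
satisfying the even-odd recurrence that agree on indices `1,…,4`, with `h 2 * h 1`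
not a zero-divisor, agree on all positive indices. -/
theorem even_odd_ext_cor {R : Type*} [CommRing R] (h h' : ℤ → R)
    (hodd : ∀ n : ℤ, 2 ≤ n →
      h (2 * n + 1) * h 1 ^ 2 = h (n + 2) * h n ^ 3 - h (n - 1) * h (n + 1) ^ 3)
    (heven : ∀ n : ℤ, 3 ≤ n →
      h (2 * n) * h 2 * h 1 ^ 2 =
        h n * (h (n + 2) * h (n - 1) ^ 2 - h (n + 1) ^ 2 * h (n - 2)))
    (hodd' : ∀ n : ℤ, 2 ≤ n →
      h' (2 * n + 1) * h' 1 ^ 2 = h' (n + 2) * h' n ^ 3 - h' (n - 1) * h' (n + 1) ^ 3)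
    (heven' : ∀ n : ℤ, 3 ≤ n →
      h' (2 * n) * h' 2 * h' 1 ^ 2 =
        h' n * (h' (n + 2) * h' (n - 1) ^ 2 - h' (n + 1) ^ 2 * h' (n - 2)))
    (hinit : ∀ n : ℤ, 1 ≤ n → n ≤ 4 → h n = h' n)
    (hreg : h 2 * h 1 ∈ nonZeroDivisors R) :
    ∀ n : ℤ, 1 ≤ n → h n = h' n := by
  have hmem := mul_mem_nonZeroDivisors.mp hreg
  have e1 : h 1 = h' 1 := hinit 1 (by norm_num) (by norm_num)
  have e2 : h 2 = h' 2 := hinit 2 (by norm_num) (by norm_num)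
  have hsq : h 1 ^ 2 ∈ nonZeroDivisors R := pow_mem hmem.2 2
  have key : ∀ N : ℕ, ∀ n : ℤ, 1 ≤ n → n ≤ N → h n = h' n := by
    intro N
    induction N with
    | zero => intro n h1 hN; push_cast at hN; omega
    | succ N ih =>
      intro n h1 hN
      push_cast at hN
      by_cases h4 : n ≤ 4
      · exact hinit n h1 h4
      obtain ⟨m, rfl | rfl⟩ := Int.even_or_odd' n
      · have E := heven m (by omega)
        have E' := heven' m (by omega)
        rw [← e1, ← e2, ← ih m (by omega) (by omega), ← ih (m + 2) (by omega) (by omega),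
          ← ih (m - 1) (by omega) (by omega), ← ih (m + 1) (by omega) (by omega),
          ← ih (m - 2) (by omega) (by omega), ← E] at E'
        exact ((mul_cancel_right_mem_nonZeroDivisors hmem.1).mp
          ((mul_cancel_right_mem_nonZeroDivisors hsq).mp E')).symm
      · have E := hodd m (by omega)
        have E' := hodd' m (by omega)
        rw [← e1, ← ih m (by omega) (by omega), ← ih (m + 2) (by omega) (by omega),
          ← ih (m - 1) (by omega) (by omega), ← ih (m + 1) (by omega) (by omega), ← E] at E'
        exact ((mul_cancel_right_mem_nonZeroDivisors hsq).mp E').symm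
  intro n hn
  exact key n.toNat n hn (by omega)
end

section
/- Let R be a commutative ring and b, c, d ∈ R. Then the normalised elliptic divisibility sequence h = normEDS b c d : ℤ → R satisfies the elliptic relation E(p,q,r,s), i.e. h(p+q)·h(p−q)·h(r+s)·h(r−s) = h(p+r)·h(p−r)·h(q+s)·h(q−s) − h(q+r)·h(q−r)·h(p+s)·h(p−s), for all integers p, q, r, s. No non-zero-divisor hypothesis on b, c, d is required. -/
/-!
Write `A(x, y) = W((x+y)/2) W((x-y)/2)` (Mathlib's `IsEllipticNet.atom`) for `x ≡ y mod 2`. The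
elliptic relation `E(p,q,r,s)` is the Plücker relation (`IsEllipticNet.atomRel`)
`A(a,b) A(c,d) - A(a,c) A(b,d) + A(a,d) A(b,c) = 0` at `(2p, 2q, 2r, 2s)`.

Everything is an identity between polynomials in `b`, `c`, `d`, so it is enough to treat a domain
with `b ≠ 0`, namely `ℤ[b, c, d]`. There the Plücker relation is proved for all quadruples of one
parity, even or odd, by induction on a bound `n` for the absolute values of the entries.

* Fix the parity `e ∈ {0, 1}`. Since `A(e+2, e)` is `1` or `b`, hence nonzero, the relations with
  `(c, d) = (e+2, e)` express `A` as a 2 × 2 minor, up to this factor, and therefore imply all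
  Plücker relations (`atomRel_eq_zero_of_base`).
* For `(a, b, e+2, e)` with `0 ≤ b < a`: if `b = a - 2` the relation is one of the two defining
  recurrences of `normEDS` (`atomRel_base_consecutive`). If `b ≤ a - 4`, replacing each entry `x` by
  `(a + b + c + d)/2 - x` leaves the relation unchanged but makes all entries smaller than `a` in
  absolute value. This substitution may change the parity, which is why both parities are needed.
-/

open IsEllipticNet

/-- If the alternating form `A = atom W` agrees, up to the scalar `k`, with the 2 × 2 minors of its
columns at `u` and `v`, then it satisfies the Plücker relation up to `k ^ 2`. -/
lemma sq_mul_atomRel_eq_zero {R : Type*} [CommRing R] (W : ℤ → R) (k : R) (u v a b c d : ℤ)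
    (H : ∀ x ∈ [a, b, c, d], ∀ y ∈ [a, b, c, d],
      atom W x y * k = atom W x u * atom W y v - atom W x v * atom W y u) :
    k ^ 2 * atomRel W a b c d = 0 := by
  have hab := H a (by simp) b (by simp)
  have hac := H a (by simp) c (by simp)
  have had := H a (by simp) d (by simp)
  have hbc := H b (by simp) c (by simp)
  have hbd := H b (by simp) d (by simp)
  have hcd := H c (by simp) d (by simp)
  have key : k ^ 2 * atomRel W a b c d = (atom W a b * k) * (atom W c d * k) -
      (atom W a c * k) * (atom W b d * k) + (atom W a d * k) * (atom W b c * k) := by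
    rw [atomRel]; ring
  rw [key, hab, hac, had, hbc, hbd, hcd]
  ring

section Domain

variable {R : Type*} [CommRing R] (b c d : R)

lemma normEDS_odd_fun : (normEDS b c d).Odd := normEDS_neg b c d

lemma atomRel_swap₁₂ {W : ℤ → R} (odd : W.Odd) (x y z t : ℤ) :
    atomRel W x y z t = -atomRel W y x z t := by
  rw [atomRel, atomRel, ← neg_atom odd y x]
  ring

/-- For `a = 2m + 2` and `a = 2m + 1` respectively, these are the odd and the even recurrence. -/
lemma atomRel_base_consecutive (a : ℤ) :
    atomRel (normEDS b c d) a (a - 2) (a % 2 + 2) (a % 2) = 0 := by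
  rcases Int.even_or_odd' a with ⟨m, rfl | rfl⟩
  · obtain ⟨m, rfl⟩ : ∃ k, m = k + 1 := ⟨m - 1, by ring⟩
    have h := normEDS_odd b c d m
    rw [show 2 * (m + 1) % 2 = 2 * 0 by omega, show 2 * (m + 1) - 2 = 2 * m by ring,
      show (2 * 0 + 2 : ℤ) = 2 * 1 by norm_num]
    simp only [atomRel, atom_even]
    ring_nf at h ⊢
    simp only [normEDS_one]
    linear_combination h
  · have h := normEDS_even b c d m
    rw [show (2 * m + 1) % 2 = 2 * 0 + 1 by omega, show 2 * m + 1 - 2 = 2 * (m - 1) + 1 by ring,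
      show (2 * 0 + 1 + 2 : ℤ) = 2 * 1 + 1 by norm_num]
    simp only [atomRel, atom_odd]
    ring_nf at h ⊢
    simp only [normEDS_one, normEDS_two]
    linear_combination h

variable {b} [IsDomain R]

lemma atom_base_ne_zero (hb : b ≠ 0) (e : ℤ) (he : e = 0 ∨ e = 1) :
    atom (normEDS b c d) (e + 2) e ≠ 0 := by
  rcases he with rfl | rfl
  · have h := atom_even (normEDS b c d) 1 0
    norm_num at h ⊢
    rw [h]; simp
  · have h := atom_odd (normEDS b c d) 1 0
    norm_num at h ⊢
    rw [h]; simpa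

/-- The base relations for `0 ≤ y < x ≤ n` imply all relations with entries bounded by `n`: signs
and the order of `x`, `y` do not matter, because `atom` is even in each variable and alternating. -/
lemma atomRel_eq_zero_of_base (hb : b ≠ 0) (n : ℤ) (e : ℤ) (he : e = 0 ∨ e = 1)
    (H : ∀ x y : ℤ, 0 ≤ y → y < x → x ≤ n → x % 2 = e → y % 2 = e →
      atomRel (normEDS b c d) x y (e + 2) e = 0)
    (x y z t : ℤ) (hx : |x| ≤ n) (hy : |y| ≤ n) (hz : |z| ≤ n) (ht : |t| ≤ n)
    (px : x % 2 = e) (py : y % 2 = e) (pz : z % 2 = e) (pt : t % 2 = e) :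
    atomRel (normEDS b c d) x y z t = 0 := by
  have odd := normEDS_odd_fun b c d
  have H' : ∀ x y : ℤ, |x| ≤ n → |y| ≤ n → x % 2 = e → y % 2 = e →
      atomRel (normEDS b c d) x y (e + 2) e = 0 := by
    intro x y hx hy px py
    rw [← atomRel_abs₁ odd, ← atomRel_abs₂ odd]
    have px' : |x| % 2 = e := by rcases abs_choice x with h | h <;> omega
    have py' : |y| % 2 = e := by rcases abs_choice y with h | h <;> omega
    rcases lt_trichotomy |x| |y| with h | h | h
    · rw [atomRel_swap₁₂ odd, H _ _ (abs_nonneg x) h hy py' px', neg_zero]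
    · rw [h, atomRel_same₁₂]; simp
    · exact H _ _ (abs_nonneg y) h hx px' py'
  refine (mul_eq_zero.mp (sq_mul_atomRel_eq_zero (normEDS b c d)
    (atom (normEDS b c d) (e + 2) e) (e + 2) e x y z t ?_)).resolve_left
      (pow_ne_zero 2 (atom_base_ne_zero c d hb e he))
  have hm : ∀ u ∈ [x, y, z, t], |u| ≤ n ∧ u % 2 = e := by
    simp [*]
  intro u hu v hv
  have h := H' u v (hm u hu).1 (hm v hv).1 (hm u hu).2 (hm v hv).2
  rw [atomRel] at h
  linear_combination h

lemma atomRel_normEDS_eq_zero_of_le (hb : b ≠ 0) (n : ℕ) : ∀ x y z t : ℤ,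
    |x| ≤ n → |y| ≤ n → |z| ≤ n → |t| ≤ n →
    x % 2 = t % 2 → y % 2 = t % 2 → z % 2 = t % 2 → atomRel (normEDS b c d) x y z t = 0 := by
  induction n with
  | zero =>
    intro x y z t hx hy _ _ _ _ _
    have hx : x = 0 := by simpa using hx
    have hy : y = 0 := by simpa using hy
    rw [hx, hy, atomRel_same₁₂]; simp
  | succ n ih =>
    intro x y z t hx hy hz ht px py pz
    refine atomRel_eq_zero_of_base c d hb (n + 1 : ℕ) (t % 2) (by omega) ?_ x y z t
      hx hy hz ht px py pz rfl
    intro x y hy0 hyx hxn px py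
    by_cases h2 : y = x - 2
    · subst h2
      rw [← px]
      exact atomRel_base_consecutive b c d x
    · -- Parity gives `y ≤ x - 4`, so that `(x + y)/2 + 1 < x`.
      rw [← atomRel_avg_sub (normEDS b c d) (by omega)]
      push_cast at hxn
      apply ih <;> first | omega | (rw [abs_le]; constructor <;> omega)

lemma normEDS_atomRel_of_ne_zero (hb : b ≠ 0) (x y z t : ℤ)
    (px : x % 2 = t % 2) (py : y % 2 = t % 2) (pz : z % 2 = t % 2) :
    atomRel (normEDS b c d) x y z t = 0 := by
  apply atomRel_normEDS_eq_zero_of_le c d hb (x.natAbs + y.natAbs + z.natAbs + t.natAbs) <;>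
    first | assumption | (rw [abs_le]; constructor <;> omega)

end Domain

lemma normEDS_atomRel_two_mul {R : Type*} [CommRing R] (b c d : R) (p q r s : ℤ) :
    atomRel (normEDS b c d) (2 * p) (2 * q) (2 * r) (2 * s) = 0 := by
  -- Specialise the universal case, where the parameters are the variables of `ℤ[X₀, X₁, X₂]`.
  let φ : MvPolynomial (Fin 3) ℤ →+* R := MvPolynomial.eval₂Hom (Int.castRingHom R) ![b, c, d]
  have h := congrArg φ (normEDS_atomRel_of_ne_zero (R := MvPolynomial (Fin 3) ℤ)
    (.X 1) (.X 2) (MvPolynomial.X_ne_zero 0) (2 * p) (2 * q) (2 * r) (2 * s)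
    (by omega) (by omega) (by omega))
  have hφ : φ ∘ normEDS (.X 0) (.X 1) (.X 2) = normEDS b c d := by
    ext n
    rw [Function.comp_apply, map_normEDS]
    simp [φ]
  rwa [map_atomRel, hφ, map_zero] at h

/-- Theorem 4.2 (first half): every normalised EDS `normEDS b c d : ℤ → R` satisfies all
elliptic relations `E(p,q,r,s)`, with no non-zero-divisor hypothesis on `b`, `c`, `d`. -/
theorem normEDS_ellRel {R : Type*} [CommRing R] (b c d : R) (p q r s : ℤ) :
    normEDS b c d (p + q) * normEDS b c d (p - q) *
        (normEDS b c d (r + s) * normEDS b c d (r - s)) =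
      normEDS b c d (p + r) * normEDS b c d (p - r) *
          (normEDS b c d (q + s) * normEDS b c d (q - s)) -
        normEDS b c d (q + r) * normEDS b c d (q - r) *
          (normEDS b c d (p + s) * normEDS b c d (p - s)) := by
  have h := normEDS_atomRel_two_mul b c d p q r s
  simp only [atomRel, atom_even] at h
  linear_combination h
end

section
/- Let R be a commutative ring, b, c, d ∈ R, and write h = normEDS b c d : ℤ → R. Then for every integer n, the product h(3)·h(2) = c·b divides h(n+1)·h(n)·h(n−1) in R. -/
/-!
Write `p = preNormEDS (b ^ 4) c d`, so that `h n = p n` for odd `n` and `h n = p n * b` for even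
`n`. The key fact is that `c = p 3` divides `p (3 * k)` for every `k`; it follows by strong
induction, since the duplication formulas express `p (6 * j)` as a multiple of `p (3 * j)`, and
`p (6 * j + 3)` as a linear combination of `p (3 * j + 3)` and `p (3 * j)`.

Among `n - 1`, `n`, `n + 1` exactly one index is a multiple of `3`, contributing the factor `c`
through `p`, and at least one is even, contributing the factor `b` outside `p`. The two factors are
therefore separate even when both indices coincide.
-/

theorem dvd_preNormEDS_three_mul_nat {R : Type*} [CommRing R] (b c d : R) (k : ℕ) :
    c ∣ preNormEDS b c d (3 * (k : ℤ)) := by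
  induction k using Nat.strong_induction_on with
  | _ k ih =>
    rcases Nat.even_or_odd' k with ⟨j, rfl | rfl⟩
    · rcases Nat.eq_zero_or_pos j with rfl | hj
      · simp
      · rw [show 3 * ((2 * j : ℕ) : ℤ) = 2 * (3 * (j : ℤ)) by push_cast; ring, preNormEDS_even]
        have h := ih j (by lia)
        exact dvd_sub ((h.mul_left _).mul_right _) ((h.mul_left _).mul_right _)
    · rcases Nat.eq_zero_or_pos j with rfl | hj
      · simp
      · rw [show 3 * ((2 * j + 1 : ℕ) : ℤ) = 2 * (3 * (j : ℤ) + 1) + 1 by push_cast; ring,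
          preNormEDS_odd]
        have h₀ := ih j (by lia)
        have h₁ := ih (j + 1) (by lia)
        rw [show 3 * ((j + 1 : ℕ) : ℤ) = 3 * (j : ℤ) + 1 + 2 by push_cast; ring] at h₁
        rw [add_sub_cancel_right]
        exact dvd_sub ((h₁.mul_right _).mul_right _) ((h₀.mul_right _).mul_right _)

theorem dvd_preNormEDS_of_three_dvd {R : Type*} [CommRing R] (b c d : R) {m : ℤ} (hm : 3 ∣ m) :
    c ∣ preNormEDS b c d m := by
  obtain ⟨k, rfl⟩ := hm
  obtain ⟨j, rfl | rfl⟩ := k.eq_nat_or_neg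
  · exact dvd_preNormEDS_three_mul_nat b c d j
  · rw [mul_neg, preNormEDS_neg, dvd_neg]
    exact dvd_preNormEDS_three_mul_nat b c d j

/-- For every normalised EDS `h = normEDS b c d`, the product `h 3 * h 2 = c * b`
divides `h (n+1) * h n * h (n-1)` for every integer `n`. -/
theorem normEDS_three_two_dvd {R : Type*} [CommRing R] (b c d : R) (n : ℤ) :
    c * b ∣ normEDS b c d (n + 1) * normEDS b c d n * normEDS b c d (n - 1) := by
  set p := preNormEDS (b ^ 4) c d with hp
  have hc : c ∣ p (n + 1) * p n * p (n - 1) := by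
    have h3 : 3 ∣ n + 1 ∨ 3 ∣ n ∨ 3 ∣ n - 1 := by lia
    rcases h3 with h | h | h
    · exact ((dvd_preNormEDS_of_three_dvd (b ^ 4) c d h).mul_right _).mul_right _
    · exact ((dvd_preNormEDS_of_three_dvd (b ^ 4) c d h).mul_left _).mul_right _
    · exact (dvd_preNormEDS_of_three_dvd (b ^ 4) c d h).mul_left _
  have hb : b ∣ (if Even (n + 1) then b else 1) * (if Even n then b else 1) *
      (if Even (n - 1) then b else 1) := by
    by_cases h : Even n
    · rw [if_pos h]
      exact (dvd_mul_left _ _).mul_right _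
    · rw [if_pos (Int.even_add_one.mpr h), mul_assoc]
      exact dvd_mul_right _ _
  convert mul_dvd_mul hc hb using 1
  simp only [normEDS, ← hp]
  ring
end

section
/- Let R = ℤ[X₂, X₃, X₄] be the polynomial ring over ℤ in three indeterminates (e.g. MvPolynomial (Fin 3) ℤ). Then every nonzero-index term of the universal normalised elliptic divisibility sequence is nonzero: for every integer n ≠ 0, normEDS X₂ X₃ X₄ n ≠ 0 in R. -/
/-!
The identity sequence `0, 1, 2, 3, 4, …` satisfies the defining recurrence, and its initial values
are those of `normEDS 2 3 2` over `ℤ`; hence `normEDS 2 3 2 n = n` (`normEDS_two_three_two`).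
Evaluating the universal sequence at `(X₂, X₃, X₄) = (2, 3, 2)` therefore sends its `n`-th term to
`n`, so that term cannot vanish for `n ≠ 0`.
-/

lemma normEDS_two_three_two_natCast (n : ℕ) : normEDS (2 : ℤ) 3 2 (n : ℤ) = n := by
  induction n using normEDSRec with
  | zero => simp
  | one => simp
  | two => exact normEDS_two ..
  | three => exact normEDS_three ..
  | four => exact normEDS_four ..
  | even m h1 h2 h3 h4 h5 =>
    have h := normEDS_even (2 : ℤ) 3 2 (m + 3)
    push_cast at *
    rw [show (m : ℤ) + 3 - 1 = m + 2 by ring, show (m : ℤ) + 3 + 2 = m + 5 by ring,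
      show (m : ℤ) + 3 - 2 = m + 1 by ring, show (m : ℤ) + 3 + 1 = m + 4 by ring,
      h1, h2, h3, h4, h5] at h
    -- the recurrence determines the even-index term only after multiplication by `b = 2`
    refine mul_right_cancel₀ (two_ne_zero (α := ℤ)) (h.trans ?_)
    ring
  | odd m h1 h2 h3 h4 =>
    have h := normEDS_odd (2 : ℤ) 3 2 (m + 2)
    push_cast at *
    rw [show (m : ℤ) + 2 + 2 = m + 4 by ring, show (m : ℤ) + 2 - 1 = m + 1 by ring,
      show (m : ℤ) + 2 + 1 = m + 3 by ring, h1, h2, h3, h4] at h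
    rw [h]
    ring

lemma normEDS_two_three_two (n : ℤ) : normEDS (2 : ℤ) 3 2 n = n := by
  induction n using Int.negInduction with
  | nat n => exact normEDS_two_three_two_natCast n
  | neg ih n => rw [normEDS_neg, ih]

open MvPolynomial in
/-- Every nonzero-index term of the universal normalised EDS over `ℤ[X₂,X₃,X₄]`
is nonzero. -/
theorem universal_normEDS_ne_zero (n : ℤ) (hn : n ≠ 0) :
    normEDS (X 0 : MvPolynomial (Fin 3) ℤ) (X 1) (X 2) n ≠ 0 := by
  intro h
  have key := congrArg (eval ![(2 : ℤ), 3, 2]) h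
  rw [map_normEDS, map_zero, eval_X, eval_X, eval_X] at key
  exact hn ((normEDS_two_three_two n).symm.trans key)
end

section
/- Let R be a commutative ring, let r, s be positive integers of opposite parity with r < s, and let A, B, D ∈ R. Define h : ℤ → R by h(m) = −A·B^(k(k+1)/2)·D^(k(k−1)/2) if m = k(r+s) − r for some k ∈ ℤ, h(m) = A·B^(k(k−1)/2)·D^(k(k+1)/2) if m = k(r+s) + r for some k ∈ ℤ, and h(m) = 0 if m is not congruent to r or −r modulo r+s. (The exponents k(k±1)/2 are nonnegative integers for every k ∈ ℤ, and the two cases are disjoint since r is not congruent to −r mod r+s.) Then h satisfies the elliptic relation E(a,b,c,d): h(a+b)·h(a−b)·h(c+d)·h(c−d) = h(a+c)·h(a−c)·h(b+d)·h(b−d) − h(b+c)·h(b−c)·h(a+d)·h(a−d) for all integers a, b, c, d. This sequence is denoted A·ES_{r,s}(B,D). -/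
/-!
Put `n = r + s`, which is odd, and `P x y = h (x + y) * h (x - y)`. The elliptic relation is the
three-term Plücker relation `P a b * P c d - P a c * P b d + P b c * P a d = 0`, so it suffices that
`P` is an alternating form of rank two. Indeed `P x y = h x ^ 2 * g y - h y ^ 2 * g x`, where
`g (l * n) = (B * D) ^ l ^ 2` and `g` vanishes off the multiples of `n` (`ES_mul_eq`).

This holds because `P x y ≠ 0` forces each of `x + y` and `x - y` to be congruent to `r` or `-r`
modulo `n`, and then `n` divides `2 * x` or `2 * y`, hence `x` or `y`. If `y = l * n`, the identity is the
parallelogram law for the triangular exponents (`tri_parallelogram`); the case `n ∣ x` follows from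
this one since `h` is odd.
-/

/-- The triangular number `m (m + 1) / 2`, the exponent occurring in the sequence. -/
def tri (m : ℤ) : ℕ := (m * (m + 1) / 2).toNat

lemma two_mul_tri (m : ℤ) : 2 * (tri m : ℤ) = m * (m + 1) := by
  have hdvd : (2 : ℤ) ∣ m * (m + 1) := (Int.even_mul_succ_self m).two_dvd
  have hnonneg : 0 ≤ m * (m + 1) := by
    rcases le_or_gt 0 m with hm | hm <;> nlinarith
  unfold tri
  omega

lemma tri_parallelogram (k l : ℤ) :
    tri (k + l) + tri (k - l) = 2 * tri k + l.natAbs ^ 2 := by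
  have h1 := two_mul_tri (k + l)
  have h2 := two_mul_tri (k - l)
  have h3 := two_mul_tri k
  zify
  rw [sq_abs]
  linarith

lemma tri_neg (k : ℤ) : tri (-k) = tri (k - 1) := by
  unfold tri
  ring_nf

/-- The second factor of the rank-two decomposition: `(B * D) ^ l ^ 2` at `l * n`, and `0` away from
the multiples of `n`. -/
noncomputable def gaussSeq {R : Type*} [CommRing R] (n : ℤ) (B D : R) (y : ℤ) : R :=
  open Classical in if n ∣ y then (B * D) ^ (y / n).natAbs ^ 2 else 0

/-- The product `h (x + y) * h (x - y)` is an alternating form of rank two. -/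
lemma ES_mul_eq {R : Type*} [CommRing R] (n r : ℤ) (hr : 0 < r) (hrn : 2 * r < n) (hodd : Odd n)
    (A B D : R) (h : ℤ → R)
    (hminus : ∀ k : ℤ, h (k * n - r) = -A * B ^ tri k * D ^ tri (k - 1))
    (hplus : ∀ k : ℤ, h (k * n + r) = A * B ^ tri (k - 1) * D ^ tri k)
    (hzero : ∀ m : ℤ, ¬ n ∣ m - r → ¬ n ∣ m + r → h m = 0) (x y : ℤ) :
    h (x + y) * h (x - y) =
      h x ^ 2 * gaussSeq n B D y - h y ^ 2 * gaussSeq n B D x := by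
  have hn0 : n ≠ 0 := by omega
  have hnr : ¬ n ∣ r := fun hd => by
    have := Int.le_of_dvd hr hd
    omega
  have hmul0 : ∀ z, n ∣ z → h z = 0 := fun z hz =>
    hzero z (fun hd => hnr ((dvd_sub_right hz).1 hd)) (fun hd => hnr ((dvd_add_right hz).1 hd))
  have hneg : ∀ z, h (-z) = -h z := by
    intro z
    by_cases h1 : n ∣ z - r
    · obtain ⟨k, hk⟩ := h1
      rw [show -z = (-k) * n - r by linarith, show z = k * n + r by linarith, hminus, hplus,
        tri_neg, show -k - 1 = -(k + 1) by ring, tri_neg, add_sub_cancel_right]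
      ring
    by_cases h2 : n ∣ z + r
    · obtain ⟨k, hk⟩ := h2
      rw [show -z = (-k) * n + r by linarith, show z = k * n - r by linarith, hminus, hplus,
        tri_neg, show -k - 1 = -(k + 1) by ring, tri_neg, add_sub_cancel_right]
      ring
    rw [hzero z h1 h2, hzero (-z), neg_zero]
    · rwa [show -z - r = -(z + r) by ring, dvd_neg]
    · rwa [show -z + r = -(z - r) by ring, dvd_neg]
  have key : ∀ x l, h (x + l * n) * h (x - l * n) = h x ^ 2 * (B * D) ^ l.natAbs ^ 2 := by
    intro x l
    by_cases h1 : n ∣ x - r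
    · obtain ⟨k, hk⟩ := h1
      have e1 := tri_parallelogram k l
      have e2 := tri_parallelogram (k - 1) l
      rw [show x + l * n = (k + l) * n + r by linarith, show x - l * n = (k - l) * n + r by linarith,
        show x = k * n + r by linarith, hplus, hplus, hplus,
        show k + l - 1 = k - 1 + l by ring, show k - l - 1 = k - 1 - l by ring]
      calc _ = A ^ 2 * B ^ (tri (k - 1 + l) + tri (k - 1 - l)) *
            D ^ (tri (k + l) + tri (k - l)) := by ring
        _ = _ := by rw [e1, e2]; ring
    by_cases h2 : n ∣ x + r
    · obtain ⟨k, hk⟩ := h2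
      have e1 := tri_parallelogram k l
      have e2 := tri_parallelogram (k - 1) l
      rw [show x + l * n = (k + l) * n - r by linarith, show x - l * n = (k - l) * n - r by linarith,
        show x = k * n - r by linarith, hminus, hminus, hminus,
        show k + l - 1 = k - 1 + l by ring, show k - l - 1 = k - 1 - l by ring]
      calc _ = A ^ 2 * B ^ (tri (k + l) + tri (k - l)) *
            D ^ (tri (k - 1 + l) + tri (k - 1 - l)) := by ring
        _ = _ := by rw [e1, e2]; ring
    have h3 : h (x + l * n) = 0 := by
      apply hzero
      · rwa [show x + l * n - r = x - r + l * n by ring, dvd_add_left (dvd_mul_left n l)]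
      · rwa [show x + l * n + r = x + r + l * n by ring, dvd_add_left (dvd_mul_left n l)]
    rw [h3, hzero x h1 h2]
    ring
  have key' : ∀ x y, n ∣ y → h (x + y) * h (x - y) = h x ^ 2 * gaussSeq n B D y := by
    rintro x y hy
    rw [gaussSeq, if_pos hy, ← key, Int.ediv_mul_cancel hy]
  by_cases hy : n ∣ y
  · rw [key' x y hy, hmul0 y hy]
    ring
  by_cases hx : n ∣ x
  · rw [← neg_sub y x, hneg, add_comm, mul_neg, key' y x hx, hmul0 x hx]
    ring
  rw [gaussSeq, if_neg hy, gaussSeq, if_neg hx, mul_zero, mul_zero, sub_zero]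
  have hcop : IsCoprime n 2 := by
    obtain ⟨m, hm⟩ := hodd
    exact ⟨1, -m, by rw [hm]; ring⟩
  have hx2 : ¬ n ∣ 2 * x := fun hd => hx (hcop.dvd_of_dvd_mul_left hd)
  have hy2 : ¬ n ∣ 2 * y := fun hd => hy (hcop.dvd_of_dvd_mul_left hd)
  by_contra hne
  have hp : n ∣ x + y - r ∨ n ∣ x + y + r := by
    by_contra! hc
    exact hne (by rw [hzero _ hc.1 hc.2, zero_mul])
  have hm : n ∣ x - y - r ∨ n ∣ x - y + r := by
    by_contra! hc
    exact hne (by rw [hzero _ hc.1 hc.2, mul_zero])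
  -- Equal residues of `x + y` and `x - y` give `n ∣ 2 * y`, opposite ones give `n ∣ 2 * x`.
  rcases hp with hp | hp <;> rcases hm with hm | hm
  · exact hy2 (by rw [show 2 * y = x + y - r - (x - y - r) by ring]; exact dvd_sub hp hm)
  · exact hx2 (by rw [show 2 * x = x + y - r + (x - y + r) by ring]; exact dvd_add hp hm)
  · exact hx2 (by rw [show 2 * x = x + y + r + (x - y - r) by ring]; exact dvd_add hp hm)
  · exact hy2 (by rw [show 2 * y = x + y + r - (x - y + r) by ring]; exact dvd_sub hp hm)

/-- Theorem 6.1: let `r < s` be positive integers of opposite parity and `A, B, D ∈ R`.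
The sequence `h = A·ES_{r,s}(B,D)`, given by
`h (k(r+s) - r) = -A * B^(k(k+1)/2) * D^(k(k-1)/2)`,
`h (k(r+s) + r) = A * B^(k(k-1)/2) * D^(k(k+1)/2)`, and `h m = 0` when
`m` is not congruent to `r` or `-r` mod `r+s`, satisfies all elliptic relations. -/
theorem ES_ellRel {R : Type*} [CommRing R] (r s : ℤ)
    (hr : 0 < r) (hrs : r < s) (hpar : r % 2 ≠ s % 2) (A B D : R) (h : ℤ → R)
    (hminus : ∀ k : ℤ,
      h (k * (r + s) - r) = -A * B ^ (k * (k + 1) / 2).toNat * D ^ (k * (k - 1) / 2).toNat)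
    (hplus : ∀ k : ℤ,
      h (k * (r + s) + r) = A * B ^ (k * (k - 1) / 2).toNat * D ^ (k * (k + 1) / 2).toNat)
    (hzero : ∀ m : ℤ, ¬m ≡ r [ZMOD r + s] → ¬m ≡ -r [ZMOD r + s] → h m = 0) :
    ∀ a b c d : ℤ,
      h (a + b) * h (a - b) * h (c + d) * h (c - d) =
        h (a + c) * h (a - c) * h (b + d) * h (b - d) -
          h (b + c) * h (b - c) * h (a + d) * h (a - d) := by
  have hodd : Odd (r + s) := by
    rw [Int.odd_iff]
    omega
  have tri_pred : ∀ k : ℤ, (k * (k - 1) / 2).toNat = tri (k - 1) := fun k => by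
    rw [tri, sub_add_cancel, mul_comm]
  have hP := ES_mul_eq (r + s) r hr (by omega) hodd A B D h
    (fun k => by rw [hminus, tri_pred]; rfl) (fun k => by rw [hplus, tri_pred]; rfl)
    (fun m h1 h2 => hzero m (fun hm => h1 hm.symm.dvd)
      (fun hm => h2 (by simpa using hm.symm.dvd)))
  intro a b c d
  rw [mul_assoc, mul_assoc (_ * h (a - c)), mul_assoc (_ * h (b - c))]
  simp only [hP]
  ring
end

section
/- Let F be a field and h a sequence indexed by the positive integers with values in F satisfying E(m,n,r,0), i.e. h(m+n)·h(m−n)·h(r)² = h(m+r)·h(m−r)·h(n)² − h(n+r)·h(n−r)·h(m)², for all integers m > n > r > 0. Then at least one of the following holds: (i) there exist an odd positive integer r and A, B, C, D ∈ F such that h(n) = A·normEDS B C D (n/r) whenever r divides n, and h(n) = 0 otherwise; (ii) there exist positive integers r < s of opposite parity with s ≠ 2r and A, B, D ∈ F such that h(m) = −A·B^(k(k+1)/2)·D^(k(k−1)/2) if m = k(r+s) − r for some k ≥ 1, h(m) = A·B^(k(k−1)/2)·D^(k(k+1)/2) if m = k(r+s) + r for some k ≥ 0, and h(m) = 0 if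 m is not congruent to ±r modulo r+s; (iii) there exist an even positive integer r and A, C ∈ F such that h(n) = A·normEDS 0 C 0 (n/r) whenever r divides n, and h(n) = 0 otherwise. -/
/-!
Extend `h` to an odd function on `ℤ` with value `0` at `0`; the relation then holds for all
integers, since it is symmetric in its three indices and blind to their signs. If `h` is not zero,
let `r` be the least positive index with `h r ≠ 0`, normalise to `h r = 1`, and let `s` be the
second index at which the sequence does not vanish.

* If there is no such `s`, the sequence is of the second kind with `B = D = 0`.
* Applying the relation to `(s + r) / 2` and `(s - r) / 2` shows that `s ≡ r (mod 2)` only if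
  `s = 3 r` (`OddElliptic.second_parity`).
* If `s = 2 r` or `s = 3 r`, minimal counterexamples show that the support lies in `r ℤ`
  (`OddElliptic.support_of_two`, `OddElliptic.support_of_three`), and `k ↦ h (r k)` is determined
  by its first four values (`OddElliptic.eq_normEDS`). For even `r` parity forces `s = 3 r`, hence
  `h (2 r) = 0`.
* Otherwise put `q = r + s`, which is odd. The support lies in `± r + q ℤ`
  (`OddElliptic.support_mod`), and `a k = h (k q + r)` satisfies
  `a (i + j) * a (i - j) = a i ^ 2 * a j * a (-j)`. Since `a (-1) = - h s ≠ 0`, the cases `j = i`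
  and `j = i + 1` determine all of `a` from `a (-1)` and `a 1` (`OddElliptic.values_mod`).
-/

/-- An odd sequence on `ℤ` satisfying the elliptic relation at all triples of integers. -/
structure OddElliptic {F : Type*} [Field F] (H : ℤ → F) : Prop where
  zero : H 0 = 0
  neg : ∀ n, H (-n) = -H n
  rel : ∀ m n c, H (m + n) * H (m - n) * H c ^ 2 =
    H (m + c) * H (m - c) * H n ^ 2 - H (n + c) * H (n - c) * H m ^ 2

/-- The odd extension to `ℤ` of the restriction of `h` to positive indices. -/
def oddExt {F : Type*} [Field F] (h : ℤ → F) (n : ℤ) : F :=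
  if 0 < n then h n else if n < 0 then -h (-n) else 0

section

variable {F : Type*} [Field F]

/-! ### Extension to all integers -/

lemma oddExt_neg (h : ℤ → F) (n : ℤ) : oddExt h (-n) = -oddExt h n := by
  unfold oddExt
  rcases lt_trichotomy n 0 with hn | rfl | hn
  · simp [hn, hn.not_gt]
  · simp
  · simp [hn, hn.not_gt]

lemma oddExt_zero (h : ℤ → F) : oddExt h 0 = 0 := by simp [oddExt]

lemma oddExt_pos (h : ℤ → F) {n : ℤ} (hn : 0 < n) : oddExt h n = h n := by simp [oddExt, hn]

lemma oddElliptic_oddExt (h : ℤ → F)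
    (hrel : ∀ m n r : ℤ, m > n → n > r → r > 0 →
      h (m + n) * h (m - n) * h r ^ 2 =
        h (m + r) * h (m - r) * h n ^ 2 - h (n + r) * h (n - r) * h m ^ 2) :
    OddElliptic (oddExt h) := by
  refine ⟨oddExt_zero h, oddExt_neg h, ?_⟩
  set H := oddExt h with hH
  have h0 : H 0 = 0 := oddExt_zero h
  have hneg : ∀ n, H (-n) = -H n := oddExt_neg h
  have hsub : ∀ a b, H (a - b) = -H (b - a) := fun a b => by rw [← hneg, neg_sub]
  have sorted : ∀ m n c : ℤ, 0 ≤ c → c ≤ n → n ≤ m → H (m + n) * H (m - n) * H c ^ 2 =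
      H (m + c) * H (m - c) * H n ^ 2 - H (n + c) * H (n - c) * H m ^ 2 := by
    intro m n c hc hcn hnm
    rcases hc.eq_or_lt with rfl | hc
    · simp only [h0, add_zero, sub_zero]; ring
    rcases hcn.eq_or_lt with rfl | hcn
    · simp only [sub_self, h0]; ring
    rcases hnm.eq_or_lt with rfl | hnm
    · simp only [sub_self, h0]; ring
    have := hrel m n c hnm hcn hc
    rw [hH]
    rwa [oddExt_pos, oddExt_pos, oddExt_pos, oddExt_pos, oddExt_pos, oddExt_pos, oddExt_pos,
      oddExt_pos, oddExt_pos] <;> omega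
  have nonneg : ∀ m n c : ℤ, 0 ≤ m → 0 ≤ n → 0 ≤ c → H (m + n) * H (m - n) * H c ^ 2 =
      H (m + c) * H (m - c) * H n ^ 2 - H (n + c) * H (n - c) * H m ^ 2 := by
    intro m n c hm hn hc
    have e1 := hsub m n
    have e2 := hsub m c
    have e3 := hsub n c
    have f1 : H (n + m) = H (m + n) := by rw [add_comm]
    have f2 : H (c + m) = H (m + c) := by rw [add_comm]
    have f3 : H (c + n) = H (n + c) := by rw [add_comm]
    rcases le_total m n with a | a <;> rcases le_total n c with b | b <;>
      rcases le_total m c with d | d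
    all_goals first
      | exact sorted m n c hc b a
      | (have := sorted n m c hc d a
         rw [f1] at this
         linear_combination (H (m + n) * H c ^ 2) * e1 - this)
      | (have := sorted m c n hn b d
         rw [f3] at this
         linear_combination - this + (H (n + c) * H m ^ 2) * e3)
      | (have := sorted n c m hm d b
         rw [f1, f2] at this
         linear_combination (H (m + n) * H c ^ 2) * e1 + this - (H (m + c) * H n ^ 2) * e2)
      | (have := sorted c m n hn a d
         rw [f2, f3] at this
         linear_combination this + (H (n + c) * H m ^ 2) * e3 - (H (m + c) * H n ^ 2) * e2)
      | (have := sorted c n m hm a b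
         rw [f1, f2, f3] at this
         linear_combination (H (m + n) * H c ^ 2) * e1 - this + (H (n + c) * H m ^ 2) * e3
           - (H (m + c) * H n ^ 2) * e2)
  have flip1 : ∀ m n, H (-m + n) * H (-m - n) = H (m + n) * H (m - n) := fun m n => by
    rw [show -m + n = -(m - n) by ring, show -m - n = -(m + n) by ring, hneg, hneg]; ring
  have flip2 : ∀ m n, H (m + -n) * H (m - -n) = H (m + n) * H (m - n) := fun m n => by
    rw [show m + -n = m - n by ring, show m - -n = m + n by ring]; ring
  intro m n c
  have habs : ∀ n, ∃ k, 0 ≤ k ∧ (n = k ∨ n = -k) := fun n =>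
    ⟨|n|, abs_nonneg n, by rcases abs_choice n with e | e <;> omega⟩
  obtain ⟨m', hm, em⟩ := habs m
  obtain ⟨n', hn, en⟩ := habs n
  obtain ⟨c', hc, ec⟩ := habs c
  have key := nonneg m' n' c' hm hn hc
  rcases em with rfl | rfl <;> rcases en with rfl | rfl <;> rcases ec with rfl | rfl <;>
    simpa only [flip1, flip2, hneg, neg_sq] using key

namespace OddElliptic

variable {H : ℤ → F}

lemma div (hH : OddElliptic H) (x : F) : OddElliptic (fun n => H n / x) where
  zero := by simp [hH.zero]
  neg n := by rw [hH.neg, neg_div]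
  rel m n c := by
    simp only [div_eq_mul_inv]
    linear_combination x⁻¹ ^ 4 * hH.rel m n c

lemma dilate (hH : OddElliptic H) (r : ℤ) : OddElliptic (fun n => H (r * n)) where
  zero := by simp [hH.zero]
  neg n := by rw [mul_neg, hH.neg]
  rel m n c := by simpa only [mul_add, mul_sub] using hH.rel (r * m) (r * n) (r * c)

/-! ### Sequences determined by their first four values -/

lemma even_eq_zero (hH : OddElliptic H) (h1 : H 1 = 1) (h2 : H 2 = 0) (h3 : H 3 ≠ 0) (k : ℕ) :
    H (2 * k) = 0 := by
  induction k with
  | zero => simpa using hH.zero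
  | succ k ih =>
    have := hH.rel (2 * (k + 1)) 2 1
    rw [show (2 * (k + 1) - 2 : ℤ) = 2 * k by ring, ih, h2, h1,
      show (2 + 1 : ℤ) = 3 by norm_num, show (2 - 1 : ℤ) = 1 by norm_num, h1] at this
    have h4 : H 3 * H (2 * (k + 1)) ^ 2 = 0 := by linear_combination this
    push_cast
    simpa [h3] using h4

/-- If `H 2 = 0`, the recurrence does not see `H 4`, which is why `H 3 ≠ 0` is needed then; in
that case `H 4 / H 2` takes the value `0`. -/
lemma eq_normEDS (hH : OddElliptic H) (h1 : H 1 = 1) (h23 : H 2 ≠ 0 ∨ H 3 ≠ 0) (n : ℕ) :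
    H n = normEDS (H 2) (H 3) (H 4 / H 2) n := by
  have hodd : ∀ m : ℤ, H (2 * m + 1) = H (m + 2) * H m ^ 3 - H (m - 1) * H (m + 1) ^ 3 := by
    intro m
    have := hH.rel (m + 1) m 1
    rw [show m + 1 + m = 2 * m + 1 by ring, show m + 1 - m = 1 by ring,
      show m + 1 + 1 = m + 2 by ring, show m + 1 - 1 = m by ring, h1] at this
    linear_combination this
  induction n using Nat.strong_induction_on with
  | _ n ih =>
  rcases Nat.even_or_odd' n with ⟨m, rfl | rfl⟩
  · by_cases h2 : H 2 = 0
    · have h3 : H 3 ≠ 0 := h23.resolve_left (not_not.2 h2)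
      push_cast
      rw [hH.even_eq_zero h1 h2 h3, h2]
      simp [normEDS]
    · rcases Nat.lt_or_ge m 3 with hm | hm
      · interval_cases m
        · simpa using hH.zero
        · simp
        · simp [div_mul_cancel₀ _ h2]
      · apply mul_right_cancel₀ h2
        push_cast
        rw [normEDS_even]
        have e1 := ih (m - 1) (by omega)
        have e2 := ih m (by omega)
        have e3 := ih (m + 2) (by omega)
        have e4 := ih (m - 2) (by omega)
        have e5 := ih (m + 1) (by omega)
        push_cast [show 1 ≤ m by omega, show 2 ≤ m by omega] at e1 e2 e3 e4 e5
        rw [← e1, ← e2, ← e3, ← e4, ← e5]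
        have := hH.rel (m + 1) (m - 1) 1
        rw [show (m + 1 + (m - 1) : ℤ) = 2 * m by ring, show (m + 1 - (m - 1) : ℤ) = 2 by ring,
          show (m + 1 + 1 : ℤ) = m + 2 by ring, show (m + 1 - 1 : ℤ) = m by ring,
          show (m - 1 + 1 : ℤ) = m by ring, show (m - 1 - 1 : ℤ) = m - 2 by ring, h1] at this
        linear_combination this
  · rcases Nat.lt_or_ge m 2 with hm | hm
    · interval_cases m
      · simp [h1]
      · simp
    · push_cast
      rw [normEDS_odd, hodd]
      have e1 := ih (m - 1) (by omega)
      have e2 := ih m (by omega)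
      have e3 := ih (m + 2) (by omega)
      have e5 := ih (m + 1) (by omega)
      push_cast [show 1 ≤ m by omega] at e1 e2 e3 e5
      rw [← e1, ← e2, ← e3, ← e5]

/-! ### The second nonvanishing index -/

lemma second_parity (hH : OddElliptic H) {r s : ℤ} (hr : 0 < r) (hrs : r < s) (h1 : H r = 1)
    (hs : H s ≠ 0) (hz : ∀ n, 0 < n → n < s → H n ≠ 0 → n = r) (hpar : r % 2 = s % 2) :
    s = 3 * r := by
  obtain ⟨n, hn⟩ : ∃ n, s = 2 * n + r := ⟨(s - r) / 2, by omega⟩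
  have := hH.rel (n + r) n r
  rw [show n + r + n = s by omega, show n + r - n = r by ring, h1] at this
  have hm : H (n + r) = 0 := by
    by_contra hne
    have := hz _ (by omega) (by omega) hne
    omega
  by_contra h3
  have hn0 : H n = 0 := by
    by_contra hne
    have := hz _ (by omega) (by omega) hne
    omega
  rw [hm, hn0] at this
  apply hs
  linear_combination this

lemma support_of_two (hH : OddElliptic H) {r : ℤ} (hr : 0 < r) (hodd : r % 2 = 1) (h1 : H r = 1)
    (h2 : H (2 * r) ≠ 0) (hz : ∀ n, 0 < n → n < 2 * r → H n ≠ 0 → n = r) :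
    ∀ n, 0 < n → ¬ r ∣ n → H n = 0 := by
  by_contra! hcon
  obtain ⟨t, ⟨ht, htr, hHt⟩, hmin⟩ := Int.exists_least_of_bdd
    (P := fun n => 0 < n ∧ ¬ r ∣ n ∧ H n ≠ 0) ⟨0, fun z hz => hz.1.le⟩ hcon
  have hlt : ∀ n, 0 < n → n < t → ¬ r ∣ n → H n = 0 := by
    intro n hn hnt hd
    by_contra hne
    have := hmin n ⟨hn, hd, hne⟩
    omega
  have ht2 : 2 * r < t := by
    by_contra hle
    rcases (not_lt.1 hle).eq_or_lt with rfl | hlt'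
    · exact htr ⟨2, by ring⟩
    · exact htr (hz t ht hlt' hHt ▸ dvd_refl _)
  -- Write `t` as the sum of two indices differing by `r` or by `2 * r`, according to parity.
  rcases Int.even_or_odd' t with ⟨k, hk | hk⟩
  · have := hH.rel (k + r) (k - r) r
    rw [show k + r + (k - r) = t by omega, show k + r - (k - r) = 2 * r by ring, h1] at this
    have a : H (k - r) = 0 := hlt _ (by omega) (by omega) fun ⟨j, hj⟩ =>
      htr ⟨2 * j + 2, by rw [hk]; linear_combination 2 * hj⟩
    have b : H (k + r) = 0 := hlt _ (by omega) (by omega) fun ⟨j, hj⟩ =>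
      htr ⟨2 * j - 2, by rw [hk]; linear_combination 2 * hj⟩
    rw [a, b] at this
    have : H t * H (2 * r) = 0 := by linear_combination this
    exact mul_ne_zero hHt h2 this
  · obtain ⟨n, hn⟩ : ∃ n, t = 2 * n + r := ⟨(t - r) / 2, by omega⟩
    have := hH.rel (n + r) n r
    rw [show n + r + n = t by omega, show n + r - n = r by ring, h1] at this
    have a : H n = 0 := hlt _ (by omega) (by omega) fun ⟨j, hj⟩ =>
      htr ⟨2 * j + 1, by rw [hn]; linear_combination 2 * hj⟩
    have b : H (n + r) = 0 := hlt _ (by omega) (by omega) fun ⟨j, hj⟩ =>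
      htr ⟨2 * j - 1, by rw [hn]; linear_combination 2 * hj⟩
    rw [a, b] at this
    apply hHt
    linear_combination this

lemma support_of_three (hH : OddElliptic H) {r : ℤ} (hr : 0 < r) (h1 : H r = 1)
    (h3 : H (3 * r) ≠ 0) (hz : ∀ n, 0 < n → n < 3 * r → H n ≠ 0 → n = r) :
    ∀ n, 0 < n → ¬ r ∣ n → H n = 0 := by
  by_contra! hcon
  obtain ⟨t, ⟨ht, htr, hHt⟩, hmin⟩ := Int.exists_least_of_bdd
    (P := fun n => 0 < n ∧ ¬ r ∣ n ∧ H n ≠ 0) ⟨0, fun z hz => hz.1.le⟩ hcon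
  have ht3 : 3 * r < t := by
    by_contra hle
    rcases (not_lt.1 hle).eq_or_lt with rfl | hlt'
    · exact htr ⟨3, by ring⟩
    · exact htr (hz t ht hlt' hHt ▸ dvd_refl _)
  have h2 : H (2 * r) = 0 := by
    by_contra hne
    have := hz _ (by omega) (by omega) hne
    omega
  have ht2 : H (t - 2 * r) = 0 := by
    by_contra hne
    have := hmin (t - 2 * r) ⟨by omega, fun ⟨j, hj⟩ => htr ⟨j + 2, by linear_combination hj⟩, hne⟩
    omega
  have := hH.rel t (2 * r) r
  rw [h2, ht2, h1, show 2 * r + r = 3 * r by ring, show 2 * r - r = r by ring, h1] at this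
  have : H (3 * r) * H t ^ 2 = 0 := by linear_combination this
  exact mul_ne_zero h3 (pow_ne_zero 2 hHt) this

/-! ### Support in two residue classes -/

lemma support_mod (hH : OddElliptic H) {r s : ℤ} (hr : 0 < r) (hrs : r < s) (h1 : H r = 1)
    (hs : H s ≠ 0) (hz : ∀ n, 0 < n → n < s → H n ≠ 0 → n = r) (hpar : r % 2 ≠ s % 2)
    (hs2 : s ≠ 2 * r) (n : ℤ) (hn : H n ≠ 0) : r + s ∣ n - r ∨ r + s ∣ n + r := by
  -- It suffices to treat positive `n`.
  suffices hpos : ∀ n, 0 < n → H n ≠ 0 → r + s ∣ n - r ∨ r + s ∣ n + r by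
    rcases lt_trichotomy n 0 with h | rfl | h
    · rcases hpos (-n) (by omega) (by rw [hH.neg]; simpa using hn) with ⟨j, hj⟩ | ⟨j, hj⟩
      · exact Or.inr ⟨-j, by linear_combination -hj⟩
      · exact Or.inl ⟨-j, by linear_combination -hj⟩
    · exact absurd hH.zero hn
    · exact hpos n h hn
  clear hn n
  by_contra! hcon
  obtain ⟨t, ⟨ht, hHt, htr, htr'⟩, hmin⟩ := Int.exists_least_of_bdd
    (P := fun n => 0 < n ∧ H n ≠ 0 ∧ ¬ r + s ∣ n - r ∧ ¬ r + s ∣ n + r)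
    ⟨0, fun z hz => hz.1.le⟩ hcon
  have hq1 : ¬ r + s ∣ r := fun h => by have := Int.le_of_dvd hr h; omega
  have hq2 : ¬ r + s ∣ 2 * r := fun h => by have := Int.le_of_dvd (by omega) h; omega
  have hq3 : ¬ r + s ∣ 3 * r := by
    rintro ⟨j, hj⟩
    have hj0 : 0 < j := by by_contra; nlinarith
    have hj1 : j < 2 := by by_contra; nlinarith
    obtain rfl : j = 1 := by omega
    omega
  have hq4 : ¬ r + s ∣ 4 * r := by
    rintro ⟨j, hj⟩
    have hj0 : 0 < j := by by_contra; nlinarith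
    have hj1 : j < 2 := by by_contra; nlinarith
    obtain rfl : j = 1 := by omega
    omega
  have hlt : ∀ n, -t < n → n < t → H n ≠ 0 → r + s ∣ n - r ∨ r + s ∣ n + r := by
    intro n hn1 hn2 hne
    by_contra! hc
    rcases lt_trichotomy n 0 with h | rfl | h
    · have := hmin (-n) ⟨by omega, by rw [hH.neg]; simpa using hne,
        fun ⟨j, hj⟩ => hc.2 ⟨-j, by linear_combination -hj⟩,
        fun ⟨j, hj⟩ => hc.1 ⟨-j, by linear_combination -hj⟩⟩
      omega
    · exact hne hH.zero
    · have := hmin n ⟨h, hne, hc⟩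
      omega
  have hst : s < t := by
    by_contra hle
    rcases (not_lt.1 hle).eq_or_lt with rfl | hlt'
    · exact htr' ⟨1, by ring⟩
    · exact htr (hz t ht hlt' hHt ▸ ⟨0, by ring⟩)
  -- Indices congruent to `± 2 * r` or `± 3 * r` are not in the support below `t`.
  have hno2 : ∀ n, -t < n → n < t → (r + s ∣ n - 2 * r ∨ r + s ∣ n + 2 * r) → H n = 0 := by
    intro n hn1 hn2 hd
    by_contra hne
    rcases hlt n hn1 hn2 hne with ⟨j, hj⟩ | ⟨j, hj⟩ <;> rcases hd with ⟨i, hi⟩ | ⟨i, hi⟩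
    · exact hq1 ⟨j - i, by linear_combination hj - hi⟩
    · exact hq3 ⟨i - j, by linear_combination hi - hj⟩
    · exact hq3 ⟨j - i, by linear_combination hj - hi⟩
    · exact hq1 ⟨i - j, by linear_combination hi - hj⟩
  have hno3 : ∀ n, -t < n → n < t → (r + s ∣ n - 3 * r ∨ r + s ∣ n + 3 * r) → H n = 0 := by
    intro n hn1 hn2 hd
    by_contra hne
    rcases hlt n hn1 hn2 hne with ⟨j, hj⟩ | ⟨j, hj⟩ <;> rcases hd with ⟨i, hi⟩ | ⟨i, hi⟩
    · exact hq2 ⟨j - i, by linear_combination hj - hi⟩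
    · exact hq4 ⟨i - j, by linear_combination hi - hj⟩
    · exact hq4 ⟨j - i, by linear_combination hj - hi⟩
    · exact hq2 ⟨i - j, by linear_combination hi - hj⟩
  -- For `t = 3 * u` the decomposition used below is a tautology, so `3 * r` and `3 * s` need
  -- a separate relation.
  have ht3r : t ≠ 3 * r := by
    intro h3
    have := hH.rel s (2 * r) r
    rw [hno2 (2 * r) (by omega) (by omega) (Or.inl ⟨0, by ring⟩),
      hno3 (s - 2 * r) (by omega) (by omega) (Or.inr ⟨1, by ring⟩), h1,
      show 2 * r + r = t by omega, show 2 * r - r = r by ring, h1] at this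
    have : H t * H s ^ 2 = 0 := by linear_combination this
    exact mul_ne_zero hHt (pow_ne_zero 2 hs) this
  have ht3s : t ≠ 3 * s := by
    intro h3
    have := hH.rel r (2 * s) s
    rw [hno2 (2 * s) (by omega) (by omega) (Or.inr ⟨2, by ring⟩),
      hno3 (r - 2 * s) (by omega) (by omega) (Or.inl ⟨-2, by ring⟩), h1,
      show 2 * s + s = t by omega, show 2 * s - s = s by ring] at this
    have : H t * H s = 0 := by linear_combination this
    exact mul_ne_zero hHt hs this
  -- Write `t` as the sum of two indices differing by `u`, where `u ∈ {r, s}` has its parity.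
  have main : ∀ u, (u = r ∨ u = s) → (∃ n, t = 2 * n + u) → t ≠ 3 * u → False := by
    rintro u hu ⟨n, hn⟩ ht3
    have hHu : H u ≠ 0 := by rcases hu with rfl | rfl <;> simp [*]
    have hu0 : 0 < u ∧ u ≤ s := by omega
    obtain ⟨e, hue⟩ : ∃ e, (u = r ∧ e = 0) ∨ (u = e * (r + s) - r ∧ e = 1) := by
      rcases hu with rfl | rfl
      · exact ⟨0, by simp⟩
      · exact ⟨1, Or.inr ⟨by ring, rfl⟩⟩
    have := hH.rel (n + u) n u
    rw [show n + u + n = t by omega, show n + u - n = u by ring,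
      show n + u + u = n + 2 * u by ring, add_sub_cancel_right] at this
    have hA : H (n + 2 * u) * H n = 0 := by
      by_contra hne
      obtain ⟨hne1, hne2⟩ := ne_zero_and_ne_zero_of_mul hne
      -- `n ≡ -u` would give `t = 2 * n + u ≡ -u`, but `t` is not congruent to `± r`.
      have hnu : r + s ∣ n - u := by
        rcases hlt n (by omega) (by omega) hne2 with ⟨j, hj⟩ | ⟨j, hj⟩ <;>
          rcases hue with ⟨hu', he⟩ | ⟨hu', he⟩
        · exact ⟨j, by rw [hu']; exact hj⟩
        · exact absurd ⟨2 * j + e, by rw [hn]; linear_combination 2 * hj + hu'⟩ htr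
        · exact absurd ⟨2 * j, by rw [hn]; linear_combination 2 * hj + hu'⟩ htr'
        · exact ⟨j - e, by linear_combination hj - hu'⟩
      have hnpos : u < n := by
        by_contra hle
        obtain ⟨j, hj⟩ := hnu
        have hj0 : j < 1 := by by_contra; nlinarith
        have hj1 : -1 < j := by by_contra; nlinarith
        obtain rfl : j = 0 := by omega
        omega
      refine hne1 (hno3 _ (by omega) (by omega) ?_)
      obtain ⟨j, hj⟩ := hnu
      rcases hue with ⟨hu', he⟩ | ⟨hu', he⟩
      · exact Or.inl ⟨j, by linear_combination hj + 3 * hu'⟩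
      · exact Or.inr ⟨j + 3 * e, by linear_combination hj + 3 * hu'⟩
    have hB : H (n - u) * H (n + u) = 0 := by
      by_contra hne
      obtain ⟨hne1, hne2⟩ := ne_zero_and_ne_zero_of_mul hne
      have hnu : r + s ∣ n + u + u := by
        rcases hlt (n + u) (by omega) (by omega) hne2 with ⟨j, hj⟩ | ⟨j, hj⟩ <;>
          rcases hue with ⟨hu', he⟩ | ⟨hu', he⟩
        · exact absurd ⟨2 * j, by rw [hn]; linear_combination 2 * hj - hu'⟩ htr
        · exact ⟨j + e, by linear_combination hj + hu'⟩
        · exact ⟨j, by rw [hu'] at hj ⊢; exact hj⟩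
        · exact absurd ⟨2 * j - e, by rw [hn]; linear_combination 2 * hj - hu'⟩ htr'
      refine hne1 (hno3 _ (by omega) (by omega) ?_)
      obtain ⟨j, hj⟩ := hnu
      rcases hue with ⟨hu', he⟩ | ⟨hu', he⟩
      · exact Or.inr ⟨j, by linear_combination hj - 3 * hu'⟩
      · exact Or.inl ⟨j - 3 * e, by linear_combination hj - 3 * hu'⟩
    have : H t * H u ^ 3 = 0 := by
      linear_combination this + H n ^ 2 * hA - H (n + u) ^ 2 * hB
    exact mul_ne_zero hHt (pow_ne_zero 3 hHu) this
  rcases Int.emod_two_eq_zero_or_one t with h | h <;>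
  rcases Int.emod_two_eq_zero_or_one r with h' | h'
  · exact main r (Or.inl rfl) ⟨(t - r) / 2, by omega⟩ ht3r
  · exact main s (Or.inr rfl) ⟨(t - s) / 2, by omega⟩ ht3s
  · exact main s (Or.inr rfl) ⟨(t - s) / 2, by omega⟩ ht3s
  · exact main r (Or.inl rfl) ⟨(t - r) / 2, by omega⟩ ht3r

/-! ### Values on the two residue classes -/

lemma toNat_triangle (k : ℤ) : ((k * (k - 1) / 2).toNat : ℤ) * 2 = k * (k - 1) := by
  have hd : (2 : ℤ) ∣ k * (k - 1) := (Int.even_mul_pred_self k).two_dvd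
  have h0 : 0 ≤ k * (k - 1) := by
    rcases le_or_gt k 0 with h | h <;> nlinarith
  rw [Int.toNat_of_nonneg (by omega)]
  omega

lemma toNat_triangle' (k : ℤ) : ((k * (k + 1) / 2).toNat : ℤ) * 2 = k * (k + 1) := by
  have := toNat_triangle (-k)
  rw [show -k * (-k - 1) = k * (k + 1) by ring] at this
  exact this

lemma values_mod (hH : OddElliptic H) {r s : ℤ} (hr : 0 < r) (hrs : r < s) (h1 : H r = 1)
    (hs : H s ≠ 0) (hsupp : ∀ n, H n ≠ 0 → r + s ∣ n - r ∨ r + s ∣ n + r) (k : ℤ) :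
    H (k * (r + s) + r) =
      (-H s) ^ (k * (k - 1) / 2).toNat * H (2 * r + s) ^ (k * (k + 1) / 2).toNat := by
  set B := -H s with hB
  set D := H (2 * r + s) with hD
  set a : ℤ → F := fun k => H (k * (r + s) + r) with ha
  have hB0 : B ≠ 0 := neg_ne_zero.2 hs
  have ha0 : a 0 = 1 := by simp [ha, h1]
  have ha1 : a 1 = D := by simp only [ha, hD]; ring_nf
  have ham1 : a (-1) = B := by simp only [ha, hB, ← hH.neg]; ring_nf
  have hq1 : ¬ r + s ∣ r := fun h => by have := Int.le_of_dvd hr h; omega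
  have hmul : ∀ j, H (j * (r + s)) = 0 := by
    intro j
    by_contra hne
    rcases hsupp _ hne with ⟨i, hi⟩ | ⟨i, hi⟩
    · exact hq1 ⟨j - i, by linear_combination -hi⟩
    · exact hq1 ⟨i - j, by linear_combination hi⟩
  have hrec : ∀ i j, a (i + j) * a (i - j) = a i ^ 2 * a j * a (-j) := by
    intro i j
    have := hH.rel (i * (r + s) + r) (j * (r + s)) r
    have e : H (j * (r + s) - r) = -a (-j) := by
      simp only [ha, ← hH.neg]; ring_nf
    rw [hmul, h1, e, show i * (r + s) + r + j * (r + s) = (i + j) * (r + s) + r by ring,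
      show i * (r + s) + r - j * (r + s) = (i - j) * (r + s) + r by ring] at this
    simp only [ha] at this ⊢
    linear_combination this
  have key : ∀ N : ℕ, ∀ k : ℤ, k.natAbs = N →
      a k = B ^ (k * (k - 1) / 2).toNat * D ^ (k * (k + 1) / 2).toNat := by
    intro N
    induction N using Nat.strong_induction_on with
    | _ N ih =>
    intro k hk
    by_cases h0 : k = 0
    · subst h0; simp [ha0]
    by_cases h1' : k = 1
    · subst h1'; simp [ha1]
    by_cases hm1 : k = -1
    · subst hm1; simp [ham1]
    rcases Int.even_or_odd' k with ⟨i, hi | hi⟩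
    · have e1 := ih i.natAbs (by omega) i rfl
      have e2 := ih (-i).natAbs (by omega) (-i) rfl
      have := hrec i i
      rw [show i + i = k by omega, sub_self, ha0, e1, e2] at this
      have t1 := toNat_triangle k
      have t2 := toNat_triangle i
      have t3 := toNat_triangle (-i)
      have u1 := toNat_triangle' k
      have u2 := toNat_triangle' i
      have u3 := toNat_triangle' (-i)
      generalize (k * (k - 1) / 2).toNat = E1 at *
      generalize (i * (i - 1) / 2).toNat = E2 at *
      generalize (-i * (-i - 1) / 2).toNat = E3 at *
      generalize (k * (k + 1) / 2).toNat = G1 at *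
      generalize (i * (i + 1) / 2).toNat = G2 at *
      generalize (-i * (-i + 1) / 2).toNat = G3 at *
      have c1 : E1 = 3 * E2 + E3 := by
        zify; subst hi; linarith
      have c2 : G1 = 3 * G2 + G3 := by
        zify; subst hi; linarith
      rw [c1, c2]
      linear_combination this
    · have e1 := ih i.natAbs (by omega) i rfl
      have e2 := ih (i + 1).natAbs (by omega) (i + 1) rfl
      have e3 := ih (-(i + 1)).natAbs (by omega) (-(i + 1)) rfl
      have := hrec i (i + 1)
      rw [show i + (i + 1) = k by omega, show i - (i + 1) = -1 by ring, ham1, e1, e2, e3] at this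
      have t1 := toNat_triangle k
      have t2 := toNat_triangle i
      have t3 := toNat_triangle (i + 1)
      have t4 := toNat_triangle (-(i + 1))
      have u1 := toNat_triangle' k
      have u2 := toNat_triangle' i
      have u3 := toNat_triangle' (i + 1)
      have u4 := toNat_triangle' (-(i + 1))
      generalize (k * (k - 1) / 2).toNat = E1 at *
      generalize (i * (i - 1) / 2).toNat = E2 at *
      generalize ((i + 1) * (i + 1 - 1) / 2).toNat = E3 at *
      generalize (-(i + 1) * (-(i + 1) - 1) / 2).toNat = E4 at *
      generalize (k * (k + 1) / 2).toNat = G1 at *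
      generalize (i * (i + 1) / 2).toNat = G2 at *
      generalize ((i + 1) * (i + 1 + 1) / 2).toNat = G3 at *
      generalize (-(i + 1) * (-(i + 1) + 1) / 2).toNat = G4 at *
      have c1 : E1 + 1 = 2 * E2 + E3 + E4 := by
        zify; subst hi; linarith
      have c2 : G1 = 2 * G2 + G3 + G4 := by
        zify; subst hi; linarith
      apply mul_right_cancel₀ hB0
      rw [this, mul_right_comm (B ^ E1), ← pow_succ, c1, c2]
      ring
  exact key _ k rfl

end OddElliptic

end


/-- Theorem 6.2 (classification over a field): a sequence `h` over a field `F`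
(indexed by positive integers, modelled as `ℤ → F` with only positive indices used)
satisfying `E(m,n,r,0)` for all `m > n > r > 0` is (i) a dilated multiple of a
normalised EDS for an odd period `r`, or (ii) a sequence `A·ES_{r,s}(B,D)` with
`r < s` of opposite parity and `s ≠ 2r`, or (iii) a dilated multiple of
`normEDS 0 C 0` for an even period `r`. -/
theorem classification_over_field {F : Type*} [Field F] (h : ℤ → F)
    (hrel : ∀ m n r : ℤ, m > n → n > r → r > 0 →
      h (m + n) * h (m - n) * h r ^ 2 =
        h (m + r) * h (m - r) * h n ^ 2 - h (n + r) * h (n - r) * h m ^ 2) :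
    (∃ r : ℤ, 0 < r ∧ Odd r ∧ ∃ A B C D : F, ∀ n : ℤ, 0 < n →
        (r ∣ n → h n = A * normEDS B C D (n / r)) ∧ (¬r ∣ n → h n = 0)) ∨
    (∃ r s : ℤ, 0 < r ∧ r < s ∧ r % 2 ≠ s % 2 ∧ s ≠ 2 * r ∧ ∃ A B D : F,
        (∀ k : ℤ, 1 ≤ k → h (k * (r + s) - r) =
          -A * B ^ (k * (k + 1) / 2).toNat * D ^ (k * (k - 1) / 2).toNat) ∧
        (∀ k : ℤ, 0 ≤ k → h (k * (r + s) + r) =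
          A * B ^ (k * (k - 1) / 2).toNat * D ^ (k * (k + 1) / 2).toNat) ∧
        (∀ m : ℤ, 0 < m → ¬m ≡ r [ZMOD r + s] → ¬m ≡ -r [ZMOD r + s] → h m = 0)) ∨
    (∃ r : ℤ, 0 < r ∧ Even r ∧ ∃ A C : F, ∀ n : ℤ, 0 < n →
        (r ∣ n → h n = A * normEDS 0 C 0 (n / r)) ∧ (¬r ∣ n → h n = 0)) := by

  by_cases hzero : ∀ n, 0 < n → h n = 0
  · exact Or.inl ⟨1, one_pos, odd_one, 0, 0, 0, 0, fun n hn => ⟨fun _ => by simp [hzero n hn],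
      fun _ => hzero n hn⟩⟩
  push Not at hzero
  obtain ⟨r, ⟨hr, hhr⟩, hrmin⟩ := Int.exists_least_of_bdd
    (P := fun n => 0 < n ∧ h n ≠ 0) ⟨0, fun z hz => hz.1.le⟩ hzero
  obtain ⟨H, hH, h1, hpos⟩ : ∃ H : ℤ → F, OddElliptic H ∧ H r = 1 ∧
      ∀ n, 0 < n → h n = h r * H n := by
    refine ⟨_, (oddElliptic_oddExt h hrel).div (h r), ?_, ?_⟩
    · simp [oddExt_pos h hr, hhr]
    · intro n hn
      rw [oddExt_pos h hn]
      field_simp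
  have hlow : ∀ n, 0 < n → n < r → H n = 0 := by
    intro n hn hnr
    by_contra hne
    have := hrmin n ⟨hn, by rw [hpos n hn]; exact mul_ne_zero hhr hne⟩
    omega
  by_cases honly : ∀ n, r < n → H n = 0
  · -- Only `h r` is nonzero: any admissible `s` will do, with `B = D = 0`.
    refine Or.inr (Or.inl ?_)
    obtain ⟨s, hrs, hpar, hs2⟩ : ∃ s, r < s ∧ r % 2 ≠ s % 2 ∧ s ≠ 2 * r := by
      by_cases h : r = 1
      · exact ⟨4, by omega, by omega, by omega⟩
      · exact ⟨r + 1, by omega, by omega, by omega⟩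
    have hpow : ∀ k : ℤ, 1 ≤ k → (0 : F) ^ (k * (k + 1) / 2).toNat = 0 := by
      intro k hk
      apply zero_pow
      have := OddElliptic.toNat_triangle' k
      intro h0
      rw [h0] at this
      push_cast at this
      nlinarith
    refine ⟨r, s, hr, hrs, hpar, hs2, h r, 0, 0, ?_, ?_, ?_⟩
    · intro k hk
      have : r < k * (r + s) - r := by nlinarith
      rw [hpos _ (by omega), honly _ this, hpow k hk]
      ring
    · intro k hk
      rcases hk.eq_or_lt with rfl | hk
      · simp
      · have : r < k * (r + s) + r := by nlinarith
        rw [hpos _ (by omega), honly _ this, hpow k hk]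
        ring
    · intro m hm hmr _
      rw [hpos m hm]
      rcases lt_trichotomy m r with h | rfl | h
      · rw [hlow m hm h, mul_zero]
      · exact absurd rfl hmr
      · rw [honly m h, mul_zero]
  push Not at honly
  obtain ⟨s, ⟨hrs, hs⟩, hsmin⟩ := Int.exists_least_of_bdd
    (P := fun n => r < n ∧ H n ≠ 0) ⟨r, fun z hz => hz.1.le⟩ honly
  have hz : ∀ n, 0 < n → n < s → H n ≠ 0 → n = r := by
    intro n hn hns hne
    rcases lt_trichotomy n r with h | h | h
    · exact absurd (hlow n hn h) hne
    · exact h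
    · have := hsmin n ⟨h, hne⟩
      omega
  have hparity := hH.second_parity hr hrs h1 hs hz
  by_cases hs23 : s = 2 * r ∨ s = 3 * r
  · have hsupp : ∀ n, 0 < n → ¬ r ∣ n → H n = 0 := by
      rcases hs23 with rfl | rfl
      · exact hH.support_of_two hr (by omega) h1 hs hz
      · exact hH.support_of_three hr h1 hs hz
    have hG := (hH.dilate r).eq_normEDS (by simpa using h1) (by
      rcases hs23 with rfl | rfl
      · left; rwa [mul_comm]
      · right; rwa [mul_comm])
    have hval : ∀ n, 0 < n →
        (r ∣ n → h n = h r * normEDS (H (r * 2)) (H (r * 3)) (H (r * 4) / H (r * 2)) (n / r)) ∧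
        (¬r ∣ n → h n = 0) := by
      intro n hn
      refine ⟨?_, fun hd => by rw [hpos n hn, hsupp n hn hd, mul_zero]⟩
      rintro ⟨k, rfl⟩
      have hk : 0 < k := by by_contra; nlinarith
      lift k to ℕ using hk.le
      rw [hpos _ hn, Int.mul_ediv_cancel_left _ hr.ne', ← hG]
    rcases Int.even_or_odd r with he | ho
    · refine Or.inr (Or.inr ⟨r, hr, he, h r, H (r * 3), ?_⟩)
      have h2 : H (r * 2) = 0 := by
        by_contra hne
        have := hsmin (r * 2) ⟨by omega, hne⟩
        have := Int.even_iff.1 he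
        omega
      simpa only [h2, div_zero] using hval
    · exact Or.inl ⟨r, hr, ho, h r, _, _, _, hval⟩
  · push Not at hs23
    have hpar : r % 2 ≠ s % 2 := fun h => hs23.2 (hparity h)
    have hsupp := hH.support_mod hr hrs h1 hs hz hpar hs23.1
    have hval := hH.values_mod hr hrs h1 hs hsupp
    refine Or.inr (Or.inl ⟨r, s, hr, hrs, hpar, hs23.1, h r, -H s, H (2 * r + s), ?_, ?_, ?_⟩)
    · intro k hk
      have := hval (-k)
      rw [show -k * (r + s) + r = -(k * (r + s) - r) by ring, hH.neg,
        show -k * (-k - 1) = k * (k + 1) by ring, show -k * (-k + 1) = k * (k - 1) by ring] at this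
      rw [hpos _ (by nlinarith)]
      linear_combination -h r * this
    · intro k hk
      rw [hpos _ (by nlinarith), hval, mul_assoc]
    · intro m hm hmr hmr'
      rw [hpos m hm]
      by_contra hne
      rcases hsupp m (right_ne_zero_of_mul hne) with hd | hd
      · exact hmr (Int.modEq_iff_dvd.2 hd).symm
      · exact hmr' (Int.modEq_iff_dvd.2 (by rwa [sub_neg_eq_add])).symm
end

section
/- Let R be a commutative ring, ℓ an odd positive integer, and h : ℤ → R a sequence satisfying the elliptic relation E(a,b,c,d) for all integers a, b, c, d. Define the ℓ-dilation g : ℤ → R by g(m) = h(m/ℓ) if ℓ divides m, and g(m) = 0 otherwise. Then g also satisfies the elliptic relation E(a,b,c,d) for all integers a, b, c, d. -/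
/-!
A product `g (x + y) * g (x - y)` can be nonzero only if `ℓ` divides `x + y` and `x - y`, hence
`2 * x` and `2 * y`, hence (as `ℓ` is odd) both `x` and `y`. Each of the three terms of the
relation is a product of two such factors which together involve all of `a, b, c, d`. So either
`ℓ` divides all four indices and the relation is that of `h` at the quotients, or all three terms
vanish.
-/

/-- Dilation (§6): if `ℓ` is an odd positive integer and `h : ℤ → R` satisfies all
elliptic relations, then its `ℓ`-dilation `g` (with `g (nℓ) = h n` and `g m = 0` when
`ℓ ∤ m`) satisfies all elliptic relations. -/
theorem dilation_ellRel {R : Type*} [CommRing R] (ℓ : ℤ) (hℓ : 0 < ℓ) (hodd : Odd ℓ)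
    (h : ℤ → R)
    (hell : ∀ a b c d : ℤ,
      h (a + b) * h (a - b) * h (c + d) * h (c - d) =
        h (a + c) * h (a - c) * h (b + d) * h (b - d) -
          h (b + c) * h (b - c) * h (a + d) * h (a - d))
    (g : ℤ → R) (hg : ∀ m : ℤ, g m = if ℓ ∣ m then h (m / ℓ) else 0) :
    ∀ a b c d : ℤ,
      g (a + b) * g (a - b) * g (c + d) * g (c - d) =
        g (a + c) * g (a - c) * g (b + d) * g (b - d) -
          g (b + c) * g (b - c) * g (a + d) * g (a - d) := by
  have hmul : ∀ n : ℤ, g (ℓ * n) = h n := fun n => by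
    rw [hg, if_pos (dvd_mul_right ℓ n), Int.mul_ediv_cancel_left _ hℓ.ne']
  have hcop : IsCoprime ℓ 2 := by
    obtain ⟨k, rfl⟩ := hodd
    exact ⟨1, -k, by ring⟩
  have hpair : ∀ x y : ℤ, ¬(ℓ ∣ x ∧ ℓ ∣ y) → g (x + y) * g (x - y) = 0 := by
    intro x y hxy
    by_cases h₁ : ℓ ∣ x + y
    · by_cases h₂ : ℓ ∣ x - y
      · refine absurd ⟨hcop.dvd_of_dvd_mul_left ?_, hcop.dvd_of_dvd_mul_left ?_⟩ hxy
        · convert dvd_add h₁ h₂ using 1; ring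
        · convert dvd_sub h₁ h₂ using 1; ring
      · rw [hg (x - y), if_neg h₂, mul_zero]
    · rw [hg (x + y), if_neg h₁, zero_mul]
  have hterm : ∀ x y z w : ℤ, ¬((ℓ ∣ x ∧ ℓ ∣ y) ∧ (ℓ ∣ z ∧ ℓ ∣ w)) →
      g (x + y) * g (x - y) * g (z + w) * g (z - w) = 0 := by
    intro x y z w hn
    rw [mul_assoc (g (x + y) * g (x - y))]
    rcases not_and_or.mp hn with hn | hn
    · rw [hpair x y hn, zero_mul]
    · rw [hpair z w hn, mul_zero]
  intro a b c d
  by_cases hall : (ℓ ∣ a ∧ ℓ ∣ b) ∧ (ℓ ∣ c ∧ ℓ ∣ d)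
  · obtain ⟨⟨⟨a, rfl⟩, ⟨b, rfl⟩⟩, ⟨c, rfl⟩, ⟨d, rfl⟩⟩ := hall
    simp only [← mul_add, ← mul_sub, hmul]
    exact hell a b c d
  · rw [hterm a b c d hall, hterm a c b d (by tauto), hterm b c a d (by tauto), sub_zero]
end
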